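/- arXiv:0910.3986 — 4 statements merged into one kernel-verified Lean document; each statement's English description precedes it below -/
import Mathlib

section
/- There exist sequences (m_k)_{k≥0} and (n_k)_{k≥0} of positive integers such that the integers b_{k,j} defined by the Keane recursion satisfy all of the following: (1) b_{k,2} is prime for every k ≥ 1; (2) b_{i,2} does not divide b_{k,3} whenever 1 ≤ i < k; (3) for every k ≥ 1, writing g_k = Π_{i=1}^{k} b_{i,2}, the number of units in ℤ/g_kℤ is strictly greater than g_k/2; (4) b_{k,2}·b_{k+1,3} + b_{k+1,3} + b_{k,4} + b_{k−1,4} < m_k·b_{k,2} for every k ≥ 1; (5) b_{k,3}·b_{k,2} + b_{k,2} < n_k·b_{k,3} for every k ≥ 1. -/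
/-!
The parameters are chosen recursively, first `n_k` and then `m_k`. Write `b_k = (a, p, c, d)` and
`g = g_k`, and maintain that `g` is odd with `g < 2 φ(g)`, that `c` is coprime to `g`, and that `p`
divides `g` and is prime (or `1`, when `k = 0`).

* Since `c` is invertible modulo `g`, a large `n_k` can be found with `b_{k+1,3} ≡ s (mod g)`
  for any prescribed `s` (`exists_n`). Both `s = 1` and `s = 2` are coprime to the odd number `g`,
  which makes `b_{k+1,3}` coprime to `g`. As `n_k c + d + a = b_{k+1,3} + c`, the prime `p` divides
  `n_k c + d` only if `s + c ≡ a (mod p)`, which fails for one of the two values of `s`.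
* Then `n_k c + d` is coprime to `p`, so by Dirichlet's theorem `b_{k+1,2} = m_k p + (n_k c + d)`
  is prime for arbitrarily large `m_k`. Size alone gives the inequality on `m_k`, the coprimality
  of `b_{k+1,3}` and `b_{k+1,2}`, and `b_{k+1,2} > g + 1`, which keeps `g < 2 φ(g)`
  (`lt_two_mul_totient_mul`).

Coprimality of `b_{k,3}` and `g_k` is stronger than the required non-divisibility.
-/


/-- The Keane recursion: `keaneB m n k j` is `b_{k,j+1}` (so index `j : Fin 4`
corresponds to the interval `I_{j+1}`), with `b_{0,i} = 1` and
`b_{k+1} = (A_{m_k, n_k})ᵀ b_k` for the Keane matrix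
`A_{m,n} = [[0,0,1,1],[m-1,m,0,0],[n,n,n-1,n],[1,1,1,1]]`. -/
def keaneB (m n : ℕ → ℕ) : ℕ → Fin 4 → ℕ
  | 0 => fun _ => 1
  | (k + 1) => fun j =>
      let b := keaneB m n k
      ![(m k - 1) * b 1 + n k * b 2 + b 3,
        m k * b 1 + n k * b 2 + b 3,
        b 0 + (n k - 1) * b 2 + b 3,
        b 0 + n k * b 2 + b 3] j

/-- Multiplying `g` by a prime exceeding `g + 1` preserves `g < 2 φ(g)`, because `g + 1 ≤ 2 φ(g)`
and `g q < (g + 1) (q - 1)`. -/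
lemma lt_two_mul_totient_mul {g q : ℕ} (hg0 : 0 < g) (hg : g < 2 * Nat.totient g)
    (hq : q.Prime) (hgq : g + 1 < q) : g * q < 2 * Nat.totient (g * q) := by
  have hc : Nat.Coprime g q :=
    ((Nat.Prime.coprime_iff_not_dvd hq).2 fun h => by
      have := Nat.le_of_dvd hg0 h
      omega).symm
  rw [Nat.totient_mul hc, Nat.totient_prime hq]
  obtain ⟨r, rfl⟩ : ∃ r, q = r + 1 := ⟨q - 1, by omega⟩
  simp only [Nat.add_sub_cancel]
  nlinarith

/-- If `c` is invertible modulo `g`, the arithmetic progression `a + r c + d` meets every residue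
class modulo `g` at arbitrarily large `r`. -/
lemma exists_n {g c : ℕ} (hg0 : 0 < g) (hc : Nat.Coprime c g) (a d s L : ℕ) :
    ∃ r, L ≤ r ∧ a + r * c + d ≡ s [MOD g] := by
  have : NeZero g := ⟨hg0.ne'⟩
  refine ⟨((c : ZMod g)⁻¹ * ((s : ZMod g) - a - d)).val + g * L, ?_, ?_⟩
  · have := Nat.le_mul_of_pos_left L hg0
    omega
  · rw [← ZMod.natCast_eq_natCast_iff]
    push_cast
    rw [ZMod.natCast_zmod_val, ZMod.natCast_self]
    linear_combination ((s : ZMod g) - a - d) * ZMod.coe_mul_inv_eq_one c hc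

/-- The property of `b = b_k` and `g = g_k` maintained by the construction. The alternative
`b 1 = 1` only serves the initial vector `b_0`. -/
def KeaneInv (b : Fin 4 → ℕ) (g : ℕ) : Prop :=
  Odd g ∧ g < 2 * Nat.totient g ∧ Nat.Coprime (b 2) g ∧ b 1 ∣ g ∧ (b 1 = 1 ∨ (b 1).Prime) ∧
    0 < b 2

/-- One step of the Keane recursion, `b ↦ (A_{m,n})ᵀ b`. -/
def keaneStep (m n : ℕ) (b : Fin 4 → ℕ) : Fin 4 → ℕ :=
  ![(m - 1) * b 1 + n * b 2 + b 3, m * b 1 + n * b 2 + b 3,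
    b 0 + (n - 1) * b 2 + b 3, b 0 + n * b 2 + b 3]

/-- The choice of `n_k` and `m_k`; `e` plays the role of `b_{k-1,4}`. -/
lemma exists_step (b : Fin 4 → ℕ) (e g : ℕ) : ∃ m n : ℕ, 0 < m ∧ 0 < n ∧ (KeaneInv b g →
    KeaneInv (keaneStep m n b) (g * keaneStep m n b 1) ∧ (keaneStep m n b 1).Prime ∧
    b 1 * keaneStep m n b 2 + keaneStep m n b 2 + b 3 + e < m * b 1 ∧
    b 2 * b 1 + b 1 < n * b 2) := by
  by_cases hI : KeaneInv b g
  swap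
  · exact ⟨1, 1, one_pos, one_pos, fun h => absurd h hI⟩
  obtain ⟨hodd, htot, hcop, hdvd, hp, hc0⟩ := hI
  simp only [keaneStep, KeaneInv, Matrix.cons_val]
  generalize b 0 = a at *
  generalize b 1 = p at *
  generalize b 2 = c at *
  generalize b 3 = d at *
  have hg0 : 0 < g := hodd.pos
  have hp0 : 0 < p := by
    rcases hp with h | h
    · omega
    · exact h.pos
  obtain ⟨s, hsg, hs⟩ : ∃ s, Nat.Coprime s g ∧ (p = 1 ∨ ¬ s + c ≡ a [MOD p]) := by
    by_cases h1 : 1 + c ≡ a [MOD p]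
    · refine ⟨2, (Nat.coprime_two_left).2 hodd, ?_⟩
      by_contra! h
      have h12 : 2 ≡ 1 [MOD p] := Nat.ModEq.add_right_cancel' c (h.2.trans h1.symm)
      have := (Nat.modEq_iff_dvd' (by norm_num : 1 ≤ 2)).1 h12.symm
      exact h.1 (by simpa using this)
    · exact ⟨1, Nat.coprime_one_left g, Or.inr h1⟩
  obtain ⟨r, hrL, hr⟩ := exists_n hg0 hcop a d s (p + p + 1)
  have hc' : Nat.Coprime (a + r * c + d) g := by
    rw [Nat.Coprime, hr.gcd_eq]
    exact hsg
  have hpn : Nat.Coprime ((r + 1) * c + d) p := by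
    rcases hp with h | h
    · rw [h]
      exact Nat.coprime_one_right _
    · refine ((Nat.Prime.coprime_iff_not_dvd h).2 fun hd => ?_).symm
      rcases hs with h1 | h1
      · exact h.one_lt.ne' h1
      · apply h1
        calc s + c ≡ (a + r * c + d) + c [MOD p] := (hr.of_dvd hdvd).symm.add_right c
          _ = ((r + 1) * c + d) + a := by ring
          _ ≡ 0 + a [MOD p] := ((Nat.modEq_zero_iff_dvd).2 hd).add_right a
          _ = a := zero_add a
  generalize hC : a + r * c + d = C at *
  -- The bound makes the prime exceed `2`, `g + 1` and `C`, and forces `m` to be as large as needed.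
  obtain ⟨q, hqgt, hq, hqmod⟩ := Nat.forall_exists_prime_gt_and_modEq
    ((r + 1) * c + d + (p * C + C + d + e) + g + 2) hp0.ne' hpn
  obtain ⟨m, hm⟩ : p ∣ q - ((r + 1) * c + d) :=
    (Nat.modEq_iff_dvd' (by omega)).1 hqmod.symm
  have hqm : m * p + (r + 1) * c + d = q := by
    rw [mul_comm m p, ← hm]
    omega
  have hm0 : 0 < m := by
    rcases Nat.eq_zero_or_pos m with h | h
    · subst h
      omega
    · exact h
  have hrc : r ≤ r * c := Nat.le_mul_of_pos_right r hc0
  have hC0 : 0 < C := by omega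
  refine ⟨m, r + 1, hm0, Nat.succ_pos r, fun _ => ?_⟩
  rw [hqm, Nat.add_sub_cancel, hC]
  refine ⟨⟨?_, ?_, ?_, dvd_mul_left q g, Or.inr hq, hC0⟩, hq, ?_, ?_⟩
  · exact hodd.mul (hq.odd_of_ne_two (by omega))
  · exact lt_two_mul_totient_mul hg0 htot hq (by omega)
  · refine Nat.Coprime.mul_right hc' ((Nat.Prime.coprime_iff_not_dvd hq).2 fun h => ?_).symm
    have := Nat.le_of_dvd hC0 h
    omega
  · omega
  · nlinarith

/-- There are sequences `(m_k)`, `(n_k)` of positive integers whose Keane recursion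
values `b_{k,j}` satisfy conditions (1)–(5):
(1) `b_{k,2}` is prime for `k ≥ 1`;
(2) `b_{i,2} ∤ b_{k,3}` for `1 ≤ i < k`;
(3) for `k ≥ 1`, the number of units of `ℤ/g_kℤ`, `g_k = ∏_{i=1}^k b_{i,2}`,
    exceeds `g_k / 2`;
(4) `b_{k,2}·b_{k+1,3} + b_{k+1,3} + b_{k,4} + b_{k-1,4} < m_k·b_{k,2}` for `k ≥ 1`;
(5) `b_{k,3}·b_{k,2} + b_{k,2} < n_k·b_{k,3}` for `k ≥ 1`. -/
theorem exists_keane_parameters :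
    ∃ m n : ℕ → ℕ, (∀ k, 0 < m k) ∧ (∀ k, 0 < n k) ∧
      (∀ k, 1 ≤ k → Nat.Prime (keaneB m n k 1)) ∧
      (∀ i k, 1 ≤ i → i < k → ¬ (keaneB m n i 1 ∣ keaneB m n k 2)) ∧
      (∀ k, 1 ≤ k →
        (∏ i ∈ Finset.Icc 1 k, keaneB m n i 1) <
          2 * Nat.totient (∏ i ∈ Finset.Icc 1 k, keaneB m n i 1)) ∧
      (∀ k, 1 ≤ k →
        keaneB m n k 1 * keaneB m n (k + 1) 2 + keaneB m n (k + 1) 2 +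
            keaneB m n k 3 + keaneB m n (k - 1) 3 <
          m k * keaneB m n k 1) ∧
      (∀ k, 1 ≤ k →
        keaneB m n k 2 * keaneB m n k 1 + keaneB m n k 1 <
          n k * keaneB m n k 2) := by
  choose M N hM hN hstep using exists_step
  -- The state at time `k` is the triple `(b_k, b_{k-1,4}, g_k)`.
  let S : ℕ → (Fin 4 → ℕ) × ℕ × ℕ := fun k => Nat.rec (fun _ => 1, 1, 1)
    (fun _ x => (keaneStep (M x.1 x.2.1 x.2.2) (N x.1 x.2.1 x.2.2) x.1, x.1 3,
      x.2.2 * keaneStep (M x.1 x.2.1 x.2.2) (N x.1 x.2.1 x.2.2) x.1 1)) k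
  let m : ℕ → ℕ := fun k => M (S k).1 (S k).2.1 (S k).2.2
  let n : ℕ → ℕ := fun k => N (S k).1 (S k).2.1 (S k).2.2
  have hsucc : ∀ k, keaneB m n (k + 1) = keaneStep (m k) (n k) (keaneB m n k) := fun k => rfl
  have hS : ∀ k, S k = (keaneB m n k, keaneB m n (k - 1) 3,
      ∏ i ∈ Finset.Icc 1 k, keaneB m n i 1) := by
    intro k
    induction k with
    | zero => rfl
    | succ k ih =>
      have h : S (k + 1) = (keaneStep (m k) (n k) (S k).1, (S k).1 3,
        (S k).2.2 * keaneStep (m k) (n k) (S k).1 1) := rfl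
      rw [h, ih, ← hsucc, Finset.prod_Icc_succ_top (by omega)]
      rfl
  have hstep' : ∀ k, KeaneInv (keaneB m n k) (∏ i ∈ Finset.Icc 1 k, keaneB m n i 1) →
      KeaneInv (keaneB m n (k + 1)) (∏ i ∈ Finset.Icc 1 (k + 1), keaneB m n i 1) ∧
      (keaneB m n (k + 1) 1).Prime ∧
      keaneB m n k 1 * keaneB m n (k + 1) 2 + keaneB m n (k + 1) 2 +
            keaneB m n k 3 + keaneB m n (k - 1) 3 < m k * keaneB m n k 1 ∧
      keaneB m n k 2 * keaneB m n k 1 + keaneB m n k 1 < n k * keaneB m n k 2 := by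
    intro k hk
    have hmk : M (keaneB m n k) (keaneB m n (k - 1) 3)
        (∏ i ∈ Finset.Icc 1 k, keaneB m n i 1) = m k := by
      change _ = M (S k).1 (S k).2.1 (S k).2.2
      rw [hS k]
    have hnk : N (keaneB m n k) (keaneB m n (k - 1) 3)
        (∏ i ∈ Finset.Icc 1 k, keaneB m n i 1) = n k := by
      change _ = N (S k).1 (S k).2.1 (S k).2.2
      rw [hS k]
    have h := hstep (keaneB m n k) (keaneB m n (k - 1) 3) _ hk
    rw [hmk, hnk, ← hsucc] at h
    rw [Finset.prod_Icc_succ_top (by omega)]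
    exact h
  have hinv : ∀ k, KeaneInv (keaneB m n k) (∏ i ∈ Finset.Icc 1 k, keaneB m n i 1) := by
    intro k
    induction k with
    | zero => simp [KeaneInv, keaneB]
    | succ k ih => exact (hstep' k ih).1
  have hprime : ∀ k, 1 ≤ k → Nat.Prime (keaneB m n k 1) := by
    intro k hk
    obtain ⟨j, rfl⟩ : ∃ j, k = j + 1 := ⟨k - 1, by omega⟩
    exact (hstep' j (hinv j)).2.1
  refine ⟨m, n, fun k => hM _ _ _, fun k => hN _ _ _, hprime, ?_, fun k _ => (hinv k).2.1,
    fun k _ => (hstep' k (hinv k)).2.2.1, fun k _ => (hstep' k (hinv k)).2.2.2⟩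
  intro i k hi hik hdvd
  have hg : keaneB m n i 1 ∣ ∏ i ∈ Finset.Icc 1 k, keaneB m n i 1 :=
    Finset.dvd_prod_of_mem (fun i => keaneB m n i 1) (Finset.mem_Icc.2 ⟨hi, hik.le⟩)
  exact Nat.not_coprime_of_dvd_of_dvd (hprime i hi).one_lt hdvd hg (hinv k).2.2.1
end

section
/- Every topologically mixing interval exchange transformation is minimal: if an IET T on [0,1) is topologically mixing, then for every x ∈ [0,1) the forward orbit {T^n(x) : n ≥ 0} is dense in [0,1). -/
/-!
Only topological transitivity is needed: some iterate of any nonempty open set meets any other.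

Fix a half-open interval `J = [α, β)`; it suffices that every forward orbit meets `J`. The return
time to `J` is bounded (`IET.exists_return_bound`). Indeed, cut `J` at the finitely many points
which, before coming back to `J`, reach a breakpoint or the preimage of an endpoint of `J`. On each
piece `[e, e')` all iterates up to the first return are translations, and either the whole piece
returns at a given time or none of it does (`IET.translation_until_return`). Until the return
the images of a piece are disjoint intervals of a fixed length inside `[0, 1)`, so the return time
is at most about the inverse of the length of the shortest piece.

If `R` bounds the return time, `W = ⋃_{n < R} T^n J` is forward invariant, and its complement
is open to the right because `T` and its inverse are right-continuous. A point outside `W` would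
thus give an open interval outside `W`, which no iterate of `J` could reach, contradicting
transitivity. So every point is `T^n z` with `z ∈ J`, and as `z` returns to `J` infinitely often,
its forward orbit meets `J`.
-/

/-- An interval exchange transformation on `d` intervals: a bijection `T` of `[0,1)`
determined by breakpoints `0 = a 0 < a 1 < ... < a d = 1`, translating each
continuity interval `[a i, a (i+1))`. -/
structure IET (d : ℕ) where
  a : Fin (d + 1) → ℝ
  mono : StrictMono a
  a_zero : a 0 = 0
  a_last : a (Fin.last d) = 1
  T : ℝ → ℝ
  bij : Set.BijOn T (Set.Ico 0 1) (Set.Ico 0 1)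
  translate : ∀ i : Fin d,
    ∃ c : ℝ, ∀ x ∈ Set.Ico (a i.castSucc) (a i.succ), T x = x + c

/-- `U` is open in the subspace topology of `[0,1) ⊆ ℝ`. -/
def OpenInUnit (U : Set ℝ) : Prop :=
  ∃ V : Set ℝ, IsOpen V ∧ U = V ∩ Set.Ico 0 1

/-- Topological mixing for a self-map of `[0,1)` (with the subspace topology). -/
def TopMixing (T : ℝ → ℝ) : Prop :=
  ∀ U V : Set ℝ, OpenInUnit U → U.Nonempty → OpenInUnit V → V.Nonempty →
    ∃ N : ℕ, ∀ n : ℕ, N ≤ n → (T^[n] '' U ∩ V).Nonempty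

open Set Filter Topology

namespace IET

variable {d : ℕ} (E : IET d)

/-! ### Iterates and rigid translation -/

lemma iterate_mem {x : ℝ} (hx : x ∈ Ico (0 : ℝ) 1) (n : ℕ) : E.T^[n] x ∈ Ico (0 : ℝ) 1 :=
  E.bij.mapsTo.iterate n hx

lemma iterate_injOn (n : ℕ) : InjOn E.T^[n] (Ico (0 : ℝ) 1) :=
  E.bij.injOn.iterate E.bij.mapsTo n

lemma exists_mem_piece {x : ℝ} (hx : x ∈ Ico (0 : ℝ) 1) :
    ∃ i : Fin d, x ∈ Ico (E.a i.castSucc) (E.a i.succ) := by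
  by_contra! h
  have key : ∀ i : Fin (d + 1), E.a i ≤ x := by
    intro i
    induction i using Fin.induction with
    | zero => rw [E.a_zero]; exact hx.1
    | succ i ih =>
      by_contra! hlt
      exact h i ⟨ih, hlt⟩
  have := key (Fin.last d)
  rw [E.a_last] at this
  exact absurd hx.2 (not_lt.2 this)

lemma translation_of_no_breakpoint {y L : ℝ} (hy : y ∈ Ico (0 : ℝ) 1)
    (h : ∀ j, E.a j ∉ Ioo y (y + L)) :
    ∀ x ∈ Ico y (y + L), E.T x = E.T y + (x - y) := by
  intro x hx
  obtain ⟨i, hi⟩ := E.exists_mem_piece hy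
  obtain ⟨c, hc⟩ := E.translate i
  have h1 : y + L ≤ E.a i.succ := by
    by_contra! hlt
    exact h i.succ ⟨hi.2, hlt⟩
  rw [hc y hi, hc x ⟨hi.1.trans hx.1, hx.2.trans_le h1⟩]
  ring

/-! ### The finite set of marked points -/

/-- The points of `[0, 1)` where the first-return partition of `[α, β)` may be cut: the
breakpoints, and the preimages of the two endpoints. -/
def cuts (α β : ℝ) : Set ℝ :=
  {q | q ∈ Ico (0 : ℝ) 1 ∧ (q ∈ range E.a ∨ E.T q = α ∨ E.T q = β)}

/-- The points of `[α, β)` which reach a cut point no later than their last time before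
returning to `[α, β)`. -/
def marked (α β : ℝ) : Set ℝ :=
  {w | w ∈ Ico α β ∧ ∃ m, E.T^[m] w ∈ E.cuts α β ∧
    ∀ k, 0 < k → k ≤ m → E.T^[k] w ∉ Ico α β}

lemma cuts_finite (α β : ℝ) : (E.cuts α β).Finite := by
  have hpre : ∀ γ : ℝ, {q | q ∈ Ico (0 : ℝ) 1 ∧ E.T q = γ}.Finite := by
    intro γ
    apply Set.Subsingleton.finite
    rintro p ⟨hp, hp'⟩ q ⟨hq, hq'⟩
    exact E.bij.injOn hp hq (hp'.trans hq'.symm)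
  refine ((finite_range E.a).union ((hpre α).union (hpre β))).subset ?_
  rintro q ⟨hq, h | h | h⟩
  · exact Or.inl h
  · exact Or.inr (Or.inl ⟨hq, h⟩)
  · exact Or.inr (Or.inr ⟨hq, h⟩)

/-- Each cut point is reached by at most one marked point, since of two points reaching it at
different times the one needing longer would have returned in between. -/
lemma marked_finite {α β : ℝ} (hJ : Ico α β ⊆ Ico (0 : ℝ) 1) : (E.marked α β).Finite := by
  have hch : ∀ w : E.marked α β, ∃ m, E.T^[m] w.1 ∈ E.cuts α β ∧
    ∀ k, 0 < k → k ≤ m → E.T^[k] w.1 ∉ Ico α β := fun w => w.2.2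
  choose m hm hk using hch
  have hlt : ∀ w w' : E.marked α β, m w < m w' →
      E.T^[m w] w.1 ≠ E.T^[m w'] w'.1 := by
    intro w w' hlt heq
    have h1 : E.T^[m w'] w'.1 = E.T^[m w] (E.T^[m w' - m w] w'.1) := by
      rw [← Function.iterate_add_apply]
      congr 2
      omega
    have h2 : w.1 = E.T^[m w' - m w] w'.1 :=
      E.iterate_injOn _ (hJ w.2.1) (E.iterate_mem (hJ w'.2.1) _) (heq.trans h1)
    exact hk w' (m w' - m w) (by omega) (by omega) (h2 ▸ w.2.1)
  have := (E.cuts_finite α β).to_subtype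
  have hinj : Function.Injective
      (fun w : E.marked α β => (⟨E.T^[m w] w.1, hm w⟩ : E.cuts α β)) := by
    intro w w' h
    have h : E.T^[m w] w.1 = E.T^[m w'] w'.1 := congrArg Subtype.val h
    rcases lt_trichotomy (m w) (m w') with hl | he | hl
    · exact absurd h (hlt w w' hl)
    · rw [he] at h
      exact Subtype.ext (E.iterate_injOn _ (hJ w.2.1) (hJ w'.2.1) h)
    · exact absurd h.symm (hlt w' w hl)
  have := Finite.of_injective _ hinj
  exact Set.toFinite _

/-! ### Bounded return times -/

/-- If `(e, e')` contains no marked point and one point of `[e, e')` does not return to `[α, β)`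
up to time `m`, then the same holds on all of `[e, e')`, which is moved rigidly up to time `m`. -/
lemma translation_until_return {α β e e' z : ℝ} (hJ : Ico α β ⊆ Ico (0 : ℝ) 1)
    (hsub : Ico e e' ⊆ Ico α β) (hD : ∀ t ∈ Ioo e e', t ∉ E.marked α β)
    (hz : z ∈ Ico e e') (m : ℕ) (hB : ∀ k, 0 < k → k ≤ m → E.T^[k] z ∉ Ico α β) :
    ∀ k, k ≤ m → ∀ t ∈ Ico e e', E.T^[k] t = E.T^[k] e + (t - e) ∧
      (0 < k → E.T^[k] t ∉ Ico α β) := by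
  intro k
  induction k using Nat.strong_induction_on with
  | _ k ih =>
  intro hkm
  rcases k with _ | k
  · intro t _
    simp
  have he : e ∈ Ico e e' := ⟨le_rfl, hz.1.trans_lt hz.2⟩
  have htr : ∀ t ∈ Ico e e', E.T^[k] t = E.T^[k] e + (t - e) :=
    fun t ht => (ih k (by omega) (by omega) t ht).1
  have hcut : ∀ t ∈ Ioo e e', E.T^[k] t ∉ E.cuts α β := by
    intro t ht hq
    have ht' : t ∈ Ico e e' := ⟨ht.1.le, ht.2⟩
    exact hD t ht ⟨hsub ht', k, hq, fun j hj hjk =>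
      (ih j (by omega) (by omega) t ht').2 hj⟩
  have hmem : ∀ t ∈ Ico e e', E.T^[k] t ∈ Ico (0 : ℝ) 1 :=
    fun t ht => E.iterate_mem (hJ (hsub ht)) k
  have hnob : ∀ j, E.a j ∉ Ioo (E.T^[k] e) (E.T^[k] e + (e' - e)) := by
    intro j hj
    have ht : e + (E.a j - E.T^[k] e) ∈ Ioo e e' :=
      ⟨by linarith [hj.1], by linarith [hj.2]⟩
    have ht' := Ioo_subset_Ico_self ht
    have hv : E.T^[k] (e + (E.a j - E.T^[k] e)) = E.a j := by
      rw [htr _ ht']; ring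
    exact hcut _ ht ⟨hmem _ ht', Or.inl ⟨j, hv.symm⟩⟩
  have htr' : ∀ t ∈ Ico e e', E.T^[k + 1] t = E.T^[k + 1] e + (t - e) := by
    intro t ht
    rw [Function.iterate_succ_apply', Function.iterate_succ_apply',
      E.translation_of_no_breakpoint (hmem e he) hnob (E.T^[k] t)
        (by rw [htr t ht]; exact ⟨by linarith [ht.1], by linarith [ht.2]⟩), htr t ht]
    ring
  have hends : ∀ t ∈ Ioo e e', E.T^[k + 1] t ≠ α ∧ E.T^[k + 1] t ≠ β := by
    intro t ht
    have hm := hmem t (Ioo_subset_Ico_self ht)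
    rw [Function.iterate_succ_apply']
    exact ⟨fun h => hcut t ht ⟨hm, Or.inr (Or.inl h)⟩,
      fun h => hcut t ht ⟨hm, Or.inr (Or.inr h)⟩⟩
  intro t ht
  refine ⟨htr' t ht, fun _ hin => ?_⟩
  have hzout := hB (k + 1) (by omega) hkm
  have hzv := htr' z hz
  have htv := htr' t ht
  -- The image of the segment between `t` and `z` would cross an endpoint of `[α, β)`.
  rcases lt_or_ge (E.T^[k + 1] z) α with hlow | hlow
  · have hs : e + (α - E.T^[k + 1] e) ∈ Ioo e e' :=
      ⟨by linarith [hz.1], by linarith [hin.1, ht.2]⟩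
    refine (hends _ hs).1 ?_
    rw [htr' _ (Ioo_subset_Ico_self hs)]; ring
  · have hhigh : β ≤ E.T^[k + 1] z := by
      by_contra! h
      exact hzout ⟨hlow, h⟩
    have hs : e + (β - E.T^[k + 1] e) ∈ Ioo e e' :=
      ⟨by linarith [hin.2, ht.1], by linarith [hz.2]⟩
    refine (hends _ hs).2 ?_
    rw [htr' _ (Ioo_subset_Ico_self hs)]; ring

lemma exists_gap {S : Set ℝ} (hS : S.Finite) :
    ∃ δ > 0, ∀ s ∈ S, ∀ t ∈ S, s < t → s + δ ≤ t := by
  have h : ∀ᶠ δ in 𝓝[>] (0 : ℝ), ∀ s ∈ S, ∀ t ∈ S, s < t → s + δ ≤ t := by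
    rw [eventually_all_finite hS]
    intro s _
    rw [eventually_all_finite hS]
    intro t _
    by_cases hst : s < t
    · filter_upwards [Ioo_mem_nhdsGT (sub_pos.2 hst)] with δ hδ _
      linarith [hδ.2]
    · exact Eventually.of_forall fun _ h => absurd h hst
  obtain ⟨δ, h1, h2⟩ := (h.and self_mem_nhdsWithin).exists
  exact ⟨δ, h2, h1⟩

/-- A bounded-time form of Poincaré recurrence. -/
lemma exists_return_bound {α β : ℝ} (hJ : Ico α β ⊆ Ico (0 : ℝ) 1) :
    ∃ R : ℕ, ∀ z ∈ Ico α β, ∃ r, 0 < r ∧ r ≤ R ∧ E.T^[r] z ∈ Ico α β := by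
  have hSfin : (E.marked α β ∪ {α, β}).Finite :=
    (E.marked_finite hJ).union (Set.toFinite _)
  obtain ⟨δ, hδ, hgap⟩ := exists_gap hSfin
  refine ⟨⌊1 / δ⌋₊ + 1, fun z hz => ?_⟩
  by_contra! hB
  obtain ⟨e, ⟨heS, hez⟩, hemax⟩ := Set.exists_max_image
    ((E.marked α β ∪ {α, β}) ∩ Iic z) id (hSfin.inter_of_left _) ⟨α, by simp, hz.1⟩
  obtain ⟨e', ⟨heS', hez'⟩, hemin⟩ := Set.exists_min_image
    ((E.marked α β ∪ {α, β}) ∩ Ioi z) id (hSfin.inter_of_left _) ⟨β, by simp, hz.2⟩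
  simp only [mem_Iic, mem_Ioi, id] at hez hez' hemax hemin
  have hαe : α ≤ e := hemax α ⟨by simp, hz.1⟩
  have heβ : e' ≤ β := hemin β ⟨by simp, hz.2⟩
  have hlen : e + δ ≤ e' := hgap e heS e' heS' (hez.trans_lt hez')
  have hsub : Ico e e' ⊆ Ico α β := Ico_subset_Ico hαe heβ
  have hD : ∀ t ∈ Ioo e e', t ∉ E.marked α β := by
    intro t ht htD
    rcases le_or_gt t z with h | h
    · exact absurd (hemax t ⟨Or.inl htD, h⟩) (not_le.2 ht.1)
    · exact absurd (hemin t ⟨Or.inl htD, h⟩) (not_le.2 ht.2)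
  have key := E.translation_until_return hJ hsub hD ⟨hez, hez'⟩ (⌊1 / δ⌋₊ + 1) hB
  have he : e ∈ Ico e e' := ⟨le_rfl, by linarith⟩
  have hmem : ∀ k, E.T^[k] e ∈ Ico (0 : ℝ) 1 := E.iterate_mem (hJ (hsub he))
  -- The intervals `T^k [e, e + δ)` are disjoint, so the `T^k e` are `δ`-separated.
  have hsep : ∀ i j, i < j → j ≤ ⌊1 / δ⌋₊ + 1 → δ ≤ |E.T^[i] e - E.T^[j] e| := by
    intro i j hij hj
    by_contra! hlt
    rw [abs_lt] at hlt
    obtain ⟨s, hs, t, ht, hst⟩ : ∃ s ∈ Ico e e', ∃ t ∈ Ico e e',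
        E.T^[i] e + (s - e) = E.T^[j] e + (t - e) := by
      rcases le_total (E.T^[i] e) (E.T^[j] e) with h | h
      · exact ⟨e + (E.T^[j] e - E.T^[i] e), ⟨by linarith, by linarith⟩, e, he, by ring⟩
      · exact ⟨e, he, e + (E.T^[i] e - E.T^[j] e), ⟨by linarith, by linarith⟩, by ring⟩
    rw [← (key i (by omega) s hs).1, ← (key j hj t ht).1] at hst
    have h1 : E.T^[j] t = E.T^[i] (E.T^[j - i] t) := by
      rw [← Function.iterate_add_apply]
      congr 2
      omega
    have h2 : s = E.T^[j - i] t :=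
      E.iterate_injOn i (hJ (hsub hs)) (E.iterate_mem (hJ (hsub ht)) _) (hst.trans h1)
    exact (key (j - i) (by omega) t ht).2 (by omega) (h2 ▸ hsub hs)
  obtain ⟨i, hi, j, hj, hij, hfl⟩ := Finset.exists_ne_map_eq_of_card_lt_of_maps_to
    (s := Finset.range (⌊1 / δ⌋₊ + 2)) (t := Finset.range (⌊1 / δ⌋₊ + 1))
    (f := fun k => ⌊E.T^[k] e / δ⌋₊) (by simp) (by
      intro k _
      simp only [Finset.coe_range, mem_Iio, Nat.lt_succ_iff]
      exact Nat.floor_le_floor (div_le_div_of_nonneg_right (hmem k).2.le hδ.le))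
  have hclose : |E.T^[i] e - E.T^[j] e| < δ := by
    have h1 := Nat.floor_le (div_nonneg (hmem i).1 hδ.le)
    have h2 := Nat.lt_floor_add_one (E.T^[i] e / δ)
    have h3 := Nat.floor_le (div_nonneg (hmem j).1 hδ.le)
    have h4 := Nat.lt_floor_add_one (E.T^[j] e / δ)
    rw [hfl] at h1 h2
    have h5 : |E.T^[i] e / δ - E.T^[j] e / δ| < 1 := by
      rw [abs_lt]; constructor <;> linarith
    rwa [← sub_div, abs_div, abs_of_pos hδ, div_lt_one hδ] at h5
  simp only [Finset.mem_range] at hi hj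
  rcases lt_or_gt_of_ne hij with h | h
  · exact absurd (hsep i j h (by omega)) (not_le.2 hclose)
  · rw [abs_sub_comm] at hclose
    exact absurd (hsep j i h (by omega)) (not_le.2 hclose)

/-! ### Right-continuity of the inverse -/

/-- The image under `T` of a set with right-open complement in `[0, 1)` is again such a set, since
the inverse of `T` is right-continuous. -/
lemma image_right_closed {S : Set ℝ} (hS : S ⊆ Ico (0 : ℝ) 1)
    (h : ∀ x ∈ Ico (0 : ℝ) 1, x ∉ S → ∀ᶠ t in 𝓝[≥] x, t ∉ S) :
    ∀ x ∈ Ico (0 : ℝ) 1, x ∉ E.T '' S → ∀ᶠ t in 𝓝[≥] x, t ∉ E.T '' S := by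
  intro x hx hxS
  obtain ⟨y, hy, rfl⟩ := E.bij.surjOn hx
  have hyS : y ∉ S := fun hh => hxS ⟨y, hh, rfl⟩
  obtain ⟨i, hi⟩ := E.exists_mem_piece hy
  obtain ⟨c, hc⟩ := E.translate i
  have hev : ∀ᶠ t in 𝓝[≥] y, t ∉ S ∧ t ∈ Ico y (E.a i.succ) ∧ t ∈ Ico y 1 :=
    (h y hy hyS).and (Filter.Eventually.and (Ico_mem_nhdsGE hi.2) (Ico_mem_nhdsGE hy.2))
  obtain ⟨u, hu, hsub⟩ := mem_nhdsGE_iff_exists_Ico_subset.1 hev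
  have hu : y < u := hu
  have hT := hc y hi
  filter_upwards [Ico_mem_nhdsGE (show E.T y < E.T y + (u - y) by linarith)] with t ht
  rintro ⟨w, hw, rfl⟩
  obtain ⟨h1, h2, h3⟩ := hsub (show y + (E.T w - E.T y) ∈ Ico y u from
    ⟨by linarith [ht.1], by linarith [ht.2]⟩)
  have h4 : E.T (y + (E.T w - E.T y)) = E.T w := by
    rw [hc _ ⟨hi.1.trans h2.1, h2.2⟩]
    linarith
  have h5 := E.bij.injOn ⟨hy.1.trans h3.1, h3.2⟩ (hS hw) h4
  exact h1 (h5.symm ▸ hw)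

lemma iterate_image_right_closed {α β : ℝ} (hJ : Ico α β ⊆ Ico (0 : ℝ) 1) (n : ℕ) :
    ∀ x ∈ Ico (0 : ℝ) 1, x ∉ E.T^[n] '' Ico α β →
      ∀ᶠ t in 𝓝[≥] x, t ∉ E.T^[n] '' Ico α β := by
  induction n with
  | zero =>
    intro x _ hxJ
    simp only [Function.iterate_zero, image_id] at hxJ ⊢
    rcases lt_or_ge x α with h | h
    · filter_upwards [Ico_mem_nhdsGE h] with t ht hin
      exact absurd hin.1 (not_le.2 ht.2)
    · filter_upwards [self_mem_nhdsWithin] with t ht hin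
      exact hxJ ⟨h, lt_of_le_of_lt ht hin.2⟩
  | succ n ih =>
    rw [Function.iterate_succ', image_comp]
    refine E.image_right_closed ?_ ih
    rintro _ ⟨w, hw, rfl⟩
    exact E.iterate_mem (hJ hw) n

/-! ### Every forward orbit meets every interval -/

lemma exists_iterate_mem (hmix : TopMixing E.T) {α β : ℝ} (hαβ : α < β)
    (hJ : Ico α β ⊆ Ico (0 : ℝ) 1) {x : ℝ} (hx : x ∈ Ico (0 : ℝ) 1) :
    ∃ n, E.T^[n] x ∈ Ico α β := by
  obtain ⟨R, hR⟩ := E.exists_return_bound hJ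
  have hrec : ∀ z ∈ Ico α β, ∀ n, ∃ m, n ≤ m ∧ E.T^[m] z ∈ Ico α β := by
    intro z hz n
    induction n with
    | zero => exact ⟨0, le_rfl, hz⟩
    | succ n ih =>
      obtain ⟨m, hnm, hm⟩ := ih
      obtain ⟨r, hr, -, hrz⟩ := hR _ hm
      exact ⟨r + m, by omega, by rwa [Function.iterate_add_apply]⟩
  have hinv : ∀ n, ∀ z ∈ Ico α β, ∃ k < R, ∃ w ∈ Ico α β, E.T^[n] z = E.T^[k] w := by
    intro n
    induction n using Nat.strong_induction_on with
    | _ n ih =>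
    intro z hz
    by_cases hn : n < R
    · exact ⟨n, hn, z, hz, rfl⟩
    · obtain ⟨r, hr, hrR, hrz⟩ := hR z hz
      obtain ⟨k, hk, w, hw, hkw⟩ := ih (n - r) (by omega) _ hrz
      refine ⟨k, hk, w, hw, ?_⟩
      rw [← hkw, ← Function.iterate_add_apply]
      congr 2
      omega
  suffices hW : ∃ k < R, x ∈ E.T^[k] '' Ico α β by
    obtain ⟨k, -, z, hz, rfl⟩ := hW
    obtain ⟨m, hkm, hm⟩ := hrec z hz k
    refine ⟨m - k, ?_⟩
    rw [← Function.iterate_add_apply]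
    rwa [Nat.sub_add_cancel hkm]
  by_contra! hW
  have hev : ∀ᶠ t in 𝓝[≥] x, ∀ k ∈ Iio R, t ∉ E.T^[k] '' Ico α β := by
    rw [eventually_all_finite (finite_Iio R)]
    exact fun k hk => E.iterate_image_right_closed hJ k x hx (hW k hk)
  obtain ⟨u, hu, hsub⟩ := mem_nhdsGE_iff_exists_Ico_subset.1
    (Filter.Eventually.and hev (Ico_mem_nhdsGE hx.2))
  have hopen : ∀ p q : ℝ, Ico p q ⊆ Ico (0 : ℝ) 1 → OpenInUnit (Ioo p q) := fun p q h =>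
    ⟨Ioo p q, isOpen_Ioo, (inter_eq_left.2 (Ioo_subset_Ico_self.trans h)).symm⟩
  obtain ⟨N, hN⟩ := hmix (Ioo α β) (Ioo x u) (hopen _ _ hJ) (nonempty_Ioo.2 hαβ)
    (hopen _ _ fun t ht => ⟨hx.1.trans ht.1, (hsub ht).2.2⟩) (nonempty_Ioo.2 hu)
  obtain ⟨_, ⟨z, hz, rfl⟩, ht⟩ := hN N le_rfl
  obtain ⟨k, hk, w, hw, hkw⟩ := hinv N z (Ioo_subset_Ico_self hz)
  exact (hsub (Ioo_subset_Ico_self ht)).1 k hk ⟨w, hw, hkw.symm⟩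

end IET

/-- Every topologically mixing IET is minimal: every forward orbit is dense in `[0,1)`. -/
theorem topMixing_IET_minimal (d : ℕ) (hd : 1 ≤ d) (E : IET d)
    (hmix : TopMixing E.T) :
    ∀ x ∈ Set.Ico (0 : ℝ) 1,
      Set.Ico (0 : ℝ) 1 ⊆ closure {y : ℝ | ∃ n : ℕ, E.T^[n] x = y} := by
  intro x hx y hy
  rw [Metric.mem_closure_iff]
  intro ε hε
  obtain ⟨n, hn⟩ := E.exists_iterate_mem hmix (α := y) (β := min (y + ε) 1)
    (lt_min (by linarith) hy.2) (Ico_subset_Ico hy.1 (min_le_right _ _)) hx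
  refine ⟨_, ⟨n, rfl⟩, ?_⟩
  have h := hn.2.trans_le (min_le_left _ _)
  rw [dist_comm, Real.dist_eq, abs_of_nonneg (by linarith [hn.1])]
  linarith
end

section
/- Let T be a minimal interval exchange transformation on d intervals. For every N ≥ 1 there exists a nonempty half-open interval V = [a,b) ⊆ [0,1) such that: every x ∈ V returns to V under T (the first return time r(x) = min{n > 0 : T^n(x) ∈ V} is finite); r(x) > N for every x ∈ V; and the first return map T|_V : V → V, T|_V(x) = T^{r(x)}(x), is itself an exchange of at most d half-open subintervals of V (a bijection of V that translates each of at most d half-open subintervals partitioning V). -/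
/-- `T` is minimal on `[0,1)`: every forward orbit is dense. -/
def IETMinimal (T : ℝ → ℝ) : Prop :=
  ∀ x ∈ Set.Ico (0 : ℝ) 1,
    Set.Ico (0 : ℝ) 1 ⊆ closure {y : ℝ | ∃ n : ℕ, T^[n] x = y}

open Set Filter Topology MeasureTheory

/-! ### Piecewise translations with a finite break set -/

/-- An injective self-map `T` of `[0,1)` which is a translation on every half-open interval without
points of the finite set `A` in its interior. -/
structure PiecewiseTrans (T : ℝ → ℝ) (A : Finset ℝ) : Prop where
  maps : ∀ x ∈ Ico (0 : ℝ) 1, T x ∈ Ico (0 : ℝ) 1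
  inj : InjOn T (Ico 0 1)
  trans : ∀ x y : ℝ, 0 ≤ x → x < y → y ≤ 1 → (∀ a ∈ A, ¬ (x < a ∧ a < y)) →
    ∃ c : ℝ, ∀ z ∈ Ico x y, T z = z + c

lemma exists_piece {s : ℕ} (q : Fin (s + 1) → ℝ) (x : ℝ) (h0 : q 0 ≤ x)
    (h1 : x < q (Fin.last s)) : ∃ i : Fin s, x ∈ Ico (q i.castSucc) (q i.succ) := by
  by_contra! hcon
  have : ∀ i : Fin (s + 1), q i ≤ x := by
    intro i
    induction i using Fin.induction with
    | zero => exact h0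
    | succ i ih =>
      by_contra! hlt
      exact hcon i ⟨ih, hlt⟩
  exact absurd (this (Fin.last s)) (not_le.mpr h1)

/-- The interior breakpoints of an exchange of `d` intervals number at most `d - 1`. -/
lemma IET.exists_breaks {d : ℕ} (hd : 1 ≤ d) (E : IET d) :
    ∃ A : Finset ℝ, A.card + 1 ≤ d ∧ PiecewiseTrans E.T A := by
  classical
  refine ⟨(Finset.univ.image (fun i : Fin d => E.a i.castSucc)).erase 0, ?_,
    fun x hx => E.bij.mapsTo hx, E.bij.injOn, ?_⟩
  · have h0 : (0 : ℝ) ∈ Finset.univ.image (fun i : Fin d => E.a i.castSucc) := by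
      rw [Finset.mem_image]
      exact ⟨⟨0, hd⟩, Finset.mem_univ _, E.a_zero⟩
    have h1 := Finset.card_image_le (s := (Finset.univ : Finset (Fin d)))
      (f := fun i : Fin d => E.a i.castSucc)
    rw [Finset.card_erase_add_one h0]
    simpa using h1
  · intro x y hx hxy hy hA
    obtain ⟨i, hi⟩ := exists_piece E.a x (by rw [E.a_zero]; exact hx)
      (by rw [E.a_last]; linarith)
    obtain ⟨c, hc⟩ := E.translate i
    refine ⟨c, fun z hz => hc z ⟨hi.1.trans hz.1, ?_⟩⟩
    by_contra! hle
    have hlt : E.a i.succ < y := lt_of_le_of_lt hle hz.2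
    refine hA (E.a i.succ) ?_ ⟨hi.2, hlt⟩
    rw [Finset.mem_erase]
    refine ⟨by linarith [hi.2], ?_⟩
    have hne : i.succ ≠ Fin.last d := by
      intro h
      rw [h, E.a_last] at hlt
      linarith
    obtain ⟨j, hj⟩ := Fin.exists_castSucc_eq.mpr hne
    rw [← hj]
    exact Finset.mem_image_of_mem (fun i : Fin d => E.a i.castSucc) (Finset.mem_univ j)

namespace PiecewiseTrans

variable {T : ℝ → ℝ} {A : Finset ℝ}

lemma iter_mem (h : PiecewiseTrans T A) (k : ℕ) {x : ℝ} (hx : x ∈ Ico (0 : ℝ) 1) :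
    T^[k] x ∈ Ico (0 : ℝ) 1 :=
  MapsTo.iterate (s := Ico (0 : ℝ) 1) (fun y hy => h.maps y hy) k hx

lemma iter_inj (h : PiecewiseTrans T A) (k : ℕ) : InjOn T^[k] (Ico 0 1) :=
  h.inj.iterate (fun y hy => h.maps y hy) k

lemma cancel (h : PiecewiseTrans T A) {x y : ℝ} (hx : x ∈ Ico (0 : ℝ) 1)
    (hy : y ∈ Ico (0 : ℝ) 1) {i j : ℕ} (hij : i ≤ j) (he : T^[i] x = T^[j] y) :
    x = T^[j - i] y := by
  apply h.iter_inj i hx (h.iter_mem _ hy)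
  rw [← Function.iterate_add_apply, Nat.add_sub_cancel' hij]
  exact he

/-- One induction step for translating an interval along the orbit. -/
lemma step (h : PiecewiseTrans T A) {p p' : ℝ} (h0 : 0 ≤ p) (hp : p < p') (h1 : p' ≤ 1)
    {k : ℕ} (hk : ∀ z ∈ Ico p p', T^[k] z = z + (T^[k] p - p))
    (hA : ∀ z ∈ Ioo p p', T^[k] z ∉ A) :
    ∀ z ∈ Ico p p', T^[k + 1] z = z + (T^[k + 1] p - p) := by
  have hI : ∀ z ∈ Ico p p', z + (T^[k] p - p) ∈ Ico (0 : ℝ) 1 := by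
    intro z hz
    rw [← hk z hz]
    exact h.iter_mem k ⟨h0.trans hz.1, hz.2.trans_le h1⟩
  have hend : p' + (T^[k] p - p) ≤ 1 := by
    by_contra! hcon
    have hp0 := hI p ⟨le_rfl, hp⟩
    have := hI (1 - (T^[k] p - p)) ⟨by linarith [hp0.2], by linarith⟩
    linarith [this.2]
  obtain ⟨c, hc⟩ := h.trans (T^[k] p) (p' + (T^[k] p - p))
    (by have := (hI p ⟨le_rfl, hp⟩).1; linarith) (by linarith) hend (by
      rintro a ha ⟨ha1, ha2⟩
      apply hA (a - (T^[k] p - p)) ⟨by linarith, by linarith⟩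
      rw [hk _ ⟨by linarith, by linarith⟩]
      simpa using ha)
  have key : ∀ z ∈ Ico p p', T^[k + 1] z = z + (T^[k] p - p) + c := by
    intro z hz
    rw [Function.iterate_succ_apply', hk z hz]
    exact hc _ ⟨by linarith [hz.1], by linarith [hz.2]⟩
  intro z hz
  rw [key z hz, key p ⟨le_rfl, hp⟩]
  ring

/-! ### Recurrence and absence of short returns -/

lemma exists_return (h : PiecewiseTrans T A) (hmin : IETMinimal T) {u v : ℝ} (h0 : 0 ≤ u)
    (huv : u < v) (h1 : v ≤ 1) {x : ℝ} (hx : x ∈ Ico (0 : ℝ) 1) :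
    ∃ n, 0 < n ∧ T^[n] x ∈ Ioo u v := by
  have hm : (u + v) / 2 ∈ Ico (0 : ℝ) 1 := ⟨by linarith, by linarith⟩
  have hcl := hmin (T x) (h.maps x hx) hm
  rw [mem_closure_iff] at hcl
  obtain ⟨y, hy, n, rfl⟩ := hcl (Ioo u v) isOpen_Ioo ⟨by linarith, by linarith⟩
  exact ⟨n + 1, Nat.succ_pos n, by rwa [Function.iterate_succ_apply]⟩

lemma not_periodic (hmin : IETMinimal T) {x : ℝ}
    (hx : x ∈ Ico (0 : ℝ) 1) {k : ℕ} (hk : 0 < k) : T^[k] x ≠ x := by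
  intro he
  have hfin : {y : ℝ | ∃ n : ℕ, T^[n] x = y}.Finite := by
    apply ((Finset.range k).finite_toSet.image (fun n => T^[n] x)).subset
    rintro y ⟨n, rfl⟩
    refine ⟨n % k, by simpa using Nat.mod_lt n hk, ?_⟩
    exact Function.IsPeriodicPt.iterate_mod_apply (f := T) he n
  have hsub := hmin x hx
  rw [hfin.isClosed.closure_eq] at hsub
  exact (Ico_infinite (zero_lt_one' ℝ)) (hfin.subset hsub)

/-- Every iterate is a translation on some interval `[x,y)` to the right of a given point `x`. -/
lemma eventually_trans (h : PiecewiseTrans T A) {x : ℝ} (hx : x ∈ Ico (0 : ℝ) 1) (k : ℕ) :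
    ∃ y, x < y ∧ y ≤ 1 ∧ ∀ z ∈ Ico x y, T^[k] z = z + (T^[k] x - x) := by
  induction k with
  | zero => exact ⟨1, hx.2, le_rfl, fun z _ => by simp⟩
  | succ k ih =>
    obtain ⟨y, hxy, hy, hk⟩ := ih
    have hev : ∀ᶠ w in 𝓝[>] x, ∀ a ∈ A, ¬ (x < a - (T^[k] x - x) ∧ a - (T^[k] x - x) < w) := by
      rw [Finset.eventually_all]
      intro a _
      rcases le_or_gt (a - (T^[k] x - x)) x with hle | hlt
      · exact Eventually.of_forall fun w hw => absurd hw.1 (not_lt.mpr hle)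
      · filter_upwards [Ioo_mem_nhdsGT hlt] with w hw hcon
        exact absurd hcon.2 (not_lt.mpr hw.2.le)
    obtain ⟨w, hw, hxw, hwy⟩ := (hev.and (Ioo_mem_nhdsGT hxy)).exists
    refine ⟨w, hxw, hwy.le.trans hy, ?_⟩
    apply h.step hx.1 hxw (hwy.le.trans hy)
    · exact fun z hz => hk z ⟨hz.1, hz.2.trans hwy⟩
    · intro z hz hzA
      rw [hk z ⟨hz.1.le, hz.2.trans hwy⟩] at hzA
      exact hw _ hzA ⟨by linarith [hz.1], by linarith [hz.2]⟩

lemma exists_no_short_return (h : PiecewiseTrans T A) (hmin : IETMinimal T) {x : ℝ}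
    (hx : x ∈ Ico (0 : ℝ) 1) (N : ℕ) :
    ∃ y, x < y ∧ y ≤ 1 ∧ ∀ k, 0 < k → k ≤ N → ∀ z ∈ Ico x y, T^[k] z ∉ Ico x y := by
  induction N with
  | zero => exact ⟨1, hx.2, le_rfl, fun k hk hk' => by omega⟩
  | succ N ih =>
    obtain ⟨y, hxy, hy, hN⟩ := ih
    obtain ⟨w, hxw, hw, hk⟩ := h.eventually_trans hx (N + 1)
    have hne : 0 < |T^[N + 1] x - x| :=
      abs_pos.mpr (sub_ne_zero.mpr (not_periodic hmin hx (Nat.succ_pos N)))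
    -- an interval shorter than its displacement is disjoint from its translate
    refine ⟨min y (min w (x + |T^[N + 1] x - x|)), lt_min hxy (lt_min hxw (lt_add_of_pos_right x hne)),
      (min_le_left _ _).trans hy, ?_⟩
    intro k hk0 hkN z hz hz'
    simp only [mem_Ico, lt_min_iff] at hz hz'
    rcases Nat.lt_or_ge N k with hlt | hle
    · obtain rfl : k = N + 1 := by omega
      rw [hk z ⟨hz.1, hz.2.2.1⟩] at hz'
      have : |T^[N + 1] x - x| < |T^[N + 1] x - x| := by
        nth_rewrite 1 [abs_lt]
        constructor <;> linarith
      exact lt_irrefl _ this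
    · exact hN k hk0 hle z ⟨hz.1, hz.2.1⟩ ⟨hz'.1, hz'.2.1⟩

/-! ### Density of the backward orbits of the breakpoints -/

/-- If no forward orbit starting in `(w₁,w₂)` met `A`, every iterate would translate `[w₁,w₂)`; a
return `w₁ ↦ w₁ + c` with `0 < c < w₂ - w₁` would then send `w₁` to `w₁ + j c` for all `j`. -/
lemma exists_hit (h : PiecewiseTrans T A) (hmin : IETMinimal T) {w₁ w₂ : ℝ} (h0 : 0 ≤ w₁)
    (hw : w₁ < w₂) (h1 : w₂ ≤ 1) : ∃ x ∈ Ioo w₁ w₂, ∃ k, T^[k] x ∈ A := by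
  by_contra! hcon
  have htr : ∀ k, ∀ z ∈ Ico w₁ w₂, T^[k] z = z + (T^[k] w₁ - w₁) := by
    intro k
    induction k with
    | zero => intro z _; simp
    | succ k ih => exact h.step h0 hw h1 ih fun z hz => hcon z hz k
  have hw1 : w₁ ∈ Ico (0 : ℝ) 1 := ⟨h0, by linarith⟩
  obtain ⟨n, -, hn⟩ := h.exists_return hmin h0 hw h1 hw1
  have hdrift : ∀ j : ℕ, T^[n * j] w₁ = w₁ + j * (T^[n] w₁ - w₁) := by
    intro j
    induction j with
    | zero => simp
    | succ j ih =>
      rw [Nat.mul_succ, Function.iterate_add_apply, htr (n * j) _ ⟨hn.1.le, hn.2⟩, ih]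
      push_cast
      ring
  obtain ⟨j, hj⟩ := Archimedean.arch (1 : ℝ) (sub_pos.mpr hn.1)
  have := (h.iter_mem (n * j) hw1).2
  rw [hdrift j] at this
  rw [nsmul_eq_mul] at hj
  linarith

/-- Two consecutive points `u < v` of `{x | ∃ k ≤ M, T^k x ∈ A}` inside a given interval. -/
lemma exists_good_interval (h : PiecewiseTrans T A) (hmin : IETMinimal T) {w₁ w₂ : ℝ}
    (h0 : 0 ≤ w₁) (hw : w₁ < w₂) (h1 : w₂ ≤ 1) :
    ∃ u v, w₁ < u ∧ u < v ∧ v < w₂ ∧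
      (∃ k, T^[k] u ∈ A ∧ ∀ m ≤ k, T^[m] u ∉ Ioo u v) ∧
      (∃ k, T^[k] v ∈ A ∧ ∀ m ≤ k, T^[m] v ∉ Ioo u v) := by
  obtain ⟨x, hx, k, hk⟩ := h.exists_hit hmin h0 (show w₁ < (w₁ + w₂) / 2 by linarith)
    (by linarith)
  obtain ⟨y, hy, l, hl⟩ := h.exists_hit hmin (by linarith)
    (show (w₁ + w₂) / 2 < w₂ by linarith) h1
  have hxI : x ∈ Ico (0 : ℝ) 1 := ⟨by linarith [hx.1], by linarith [hx.2]⟩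
  let D : Set ℝ := {z | z ∈ Ico (0 : ℝ) 1 ∧ ∃ j ≤ max k l, T^[j] z ∈ A}
  have hDfin : D.Finite := by
    have : D ⊆ ⋃ j ∈ Finset.range (max k l + 1), (Ico (0 : ℝ) 1 ∩ T^[j] ⁻¹' (A : Set ℝ)) := by
      rintro z ⟨hz, j, hj, hjA⟩
      simp only [mem_iUnion]
      exact ⟨j, Finset.mem_range.mpr (by omega), hz, hjA⟩
    refine Set.Finite.subset ?_ this
    refine Set.Finite.biUnion (Finset.finite_toSet _) fun j _ => ?_
    refine Set.Finite.of_finite_image (f := T^[j]) ?_ ((h.iter_inj j).mono inter_subset_left)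
    exact A.finite_toSet.subset (by rintro _ ⟨z, hz, rfl⟩; exact hz.2)
  -- `v` is the successor of `x` in the finite set `D`
  have hyD : y ∈ D ∩ Ioi x :=
    ⟨⟨⟨by linarith [hy.1], by linarith [hy.2]⟩, l, le_max_right _ _, hl⟩,
      by have := hx.2; have := hy.1; exact mem_Ioi.mpr (by linarith)⟩
  obtain ⟨v, ⟨⟨hvI, j, hj, hjA⟩, hxv⟩, hvmin⟩ :=
    Set.exists_min_image (D ∩ Ioi x) id (hDfin.inter_of_left _) ⟨y, hyD⟩
  have hgap : ∀ z ∈ D, z ∉ Ioo x v := fun z hz hz' =>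
    absurd (hvmin z ⟨hz, hz'.1⟩) (not_le.mpr hz'.2)
  have horb : ∀ {z : ℝ} {i : ℕ}, z ∈ Ico (0 : ℝ) 1 → i ≤ max k l → T^[i] z ∈ A →
      ∀ m ≤ i, T^[m] z ∉ Ioo x v := by
    intro z i hz hi hA m hm
    refine hgap _ ⟨h.iter_mem m hz, i - m, by omega, ?_⟩
    rwa [← Function.iterate_add_apply, Nat.sub_add_cancel hm]
  have hvy : v ≤ y := hvmin y hyD
  exact ⟨x, v, hx.1, hxv, hvy.trans_lt hy.2,
    ⟨k, hk, horb hxI (le_max_left _ _) hk⟩, ⟨j, hjA, horb hvI hj hjA⟩⟩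

end PiecewiseTrans

/-! ### Breaks of the first return map -/

/-- `r` is a first return time function to `[u,v)`; its values off `[u,v)` are irrelevant. -/
def IsReturnTime (T : ℝ → ℝ) (u v : ℝ) (r : ℝ → ℕ) : Prop :=
  ∀ x ∈ Ico u v, 0 < r x ∧ T^[r x] x ∈ Ico u v ∧ ∀ j, 0 < j → j < r x → T^[j] x ∉ Ico u v

/-- The candidate break points of the return map to `[u,v)`: interior points whose orbit meets `A`
before the return, or an endpoint of `[u,v)` no later than the return. -/
def breakSet (T : ℝ → ℝ) (A : Finset ℝ) (u v : ℝ) (r : ℝ → ℕ) : Set ℝ :=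
  {p | p ∈ Ioo u v ∧ ∃ k, (k < r p ∧ T^[k] p ∈ A) ∨
    (0 < k ∧ k ≤ r p ∧ (T^[k] p = u ∨ T^[k] p = v))}

namespace PiecewiseTrans

variable {T : ℝ → ℝ} {A : Finset ℝ} {u v : ℝ} {r : ℝ → ℕ}

/-- Two points of `[u,v)` whose orbits merge before either returns are equal. -/
lemma eq_of_merge (h : PiecewiseTrans T A) (h0 : 0 ≤ u) (h1 : v ≤ 1) (hr : IsReturnTime T u v r)
    {p p' : ℝ} (hp : p ∈ Ico u v) (hp' : p' ∈ Ico u v) {i j : ℕ} (he : T^[i] p = T^[j] p')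
    (hi : i - j < r p) (hj : j - i < r p') : p = p' := by
  have hpI : p ∈ Ico (0 : ℝ) 1 := ⟨h0.trans hp.1, hp.2.trans_le h1⟩
  have hpI' : p' ∈ Ico (0 : ℝ) 1 := ⟨h0.trans hp'.1, hp'.2.trans_le h1⟩
  rcases le_total i j with hij | hij
  · have hc := h.cancel hpI hpI' hij he
    rcases Nat.eq_zero_or_pos (j - i) with hz | hpos
    · rw [hz] at hc; exact hc
    · exact absurd (hc ▸ hp) ((hr p' hp').2.2 _ hpos hj)
  · have hc := h.cancel hpI' hpI hij he.symm
    rcases Nat.eq_zero_or_pos (i - j) with hz | hpos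
    · rw [hz] at hc; exact hc.symm
    · exact absurd (hc ▸ hp') ((hr p hp).2.2 _ hpos hi)

/-- The return time is constant, and the return map a translation, on half-open intervals without
breaks in their interior. -/
lemma return_const (h : PiecewiseTrans T A) (h0 : 0 ≤ u) (h1 : v ≤ 1)
    (hr : IsReturnTime T u v r) {p p' : ℝ} (hup : u ≤ p) (hpp : p < p') (hpv : p' ≤ v)
    (hB : ∀ x ∈ Ioo p p', x ∉ breakSet T A u v r) :
    ∀ z ∈ Ico p p', r z = r p ∧ T^[r p] z = z + (T^[r p] p - p) := by
  have hV : ∀ z ∈ Ico p p', z ∈ Ico u v := fun z hz => ⟨hup.trans hz.1, hz.2.trans_le hpv⟩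
  have hB' : ∀ x ∈ Ioo p p', ∀ k, ¬ ((k < r x ∧ T^[k] x ∈ A) ∨
      (0 < k ∧ k ≤ r x ∧ (T^[k] x = u ∨ T^[k] x = v))) :=
    fun x hx k hk => hB x hx ⟨⟨by linarith [hx.1], by linarith [hx.2]⟩, k, hk⟩
  have hpJ : p ∈ Ico p p' := ⟨le_rfl, hpp⟩
  have key : ∀ k ≤ r p, ∀ z ∈ Ico p p', T^[k] z = z + (T^[k] p - p) ∧ k ≤ r z := by
    intro k
    induction k with
    | zero => intro _ z _; simp
    | succ k ih =>
      intro hk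
      have ih := ih (by omega)
      have hlt : ∀ z ∈ Ico p p', k < r z := by
        intro z hz
        rcases Nat.eq_zero_or_pos k with rfl | hkpos
        · exact (hr z (hV z hz)).1
        refine lt_of_le_of_ne (ih z hz).2 fun heq => ?_
        have hzV : T^[k] z ∈ Ico u v := heq ▸ (hr z (hV z hz)).2.1
        have hpV := (hr p (hV p hpJ)).2.2 k hkpos (by omega)
        rw [(ih z hz).1] at hzV
        have hpu : T^[k] p < u := by
          by_contra! hge
          exact hpV ⟨hge, by linarith [hz.1, hzV.2]⟩
        -- the point of `(p,z]` whose `k`-th image is the endpoint `u` would be a break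
        have hx : u - (T^[k] p - p) ∈ Ioo p p' :=
          ⟨by linarith, by linarith [hzV.1, hz.2]⟩
        refine hB' _ hx k (Or.inr ⟨hkpos, (ih _ ⟨hx.1.le, hx.2⟩).2, Or.inl ?_⟩)
        rw [(ih _ ⟨hx.1.le, hx.2⟩).1]
        ring
      have hst := h.step (h0.trans hup) hpp (hpv.trans h1) (fun z hz => (ih z hz).1)
        (fun z hz hzA => hB' z hz k (Or.inl ⟨hlt z ⟨hz.1.le, hz.2⟩, hzA⟩))
      exact fun z hz => ⟨hst z hz, hlt z hz⟩
  intro z hz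
  obtain ⟨hzt, hzr⟩ := key _ le_rfl z hz
  refine ⟨?_, hzt⟩
  obtain ⟨hrp, hpV, -⟩ := hr p (hV p hpJ)
  by_contra hne
  have hnot := (hr z (hV z hz)).2.2 (r p) hrp (by omega)
  rw [hzt] at hnot
  have hge : v ≤ z + (T^[r p] p - p) := by
    by_contra! hlt
    exact hnot ⟨by linarith [hpV.1, hz.1], hlt⟩
  have hx : v - (T^[r p] p - p) ∈ Ioo p p' := ⟨by linarith [hpV.2], by linarith [hz.2]⟩
  refine hB' _ hx (r p) (Or.inr ⟨hrp, (key _ le_rfl _ ⟨hx.1.le, hx.2⟩).2, Or.inr ?_⟩)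
  rw [(key _ le_rfl _ ⟨hx.1.le, hx.2⟩).1]
  ring

/-- A break passing through `v` follows the orbit of `v` to `A`, unless it returns at `u` first. -/
lemma break_cases (hr : IsReturnTime T u v r)
    (hv : ∃ k, T^[k] v ∈ A ∧ ∀ m ≤ k, T^[m] v ∉ Ioo u v) {p : ℝ}
    (hp : p ∈ breakSet T A u v r) : (∃ k < r p, T^[k] p ∈ A) ∨ T^[r p] p = u := by
  obtain ⟨hpI, k, ⟨hk, hkA⟩ | ⟨hk0, hk, hku | hkv⟩⟩ := hp
  · exact Or.inl ⟨k, hk, hkA⟩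
  · have hpV : p ∈ Ico u v := ⟨hpI.1.le, hpI.2⟩
    rcases hk.lt_or_eq with hlt | rfl
    · refine absurd ?_ ((hr p hpV).2.2 k hk0 hlt)
      rw [hku]
      exact ⟨le_rfl, hpI.1.trans hpI.2⟩
    · exact Or.inr hku
  · have hpV : p ∈ Ico u v := ⟨hpI.1.le, hpI.2⟩
    obtain ⟨l, hlA, hl⟩ := hv
    rcases Nat.lt_or_ge (k + l) (r p) with hlt | hge
    · refine Or.inl ⟨k + l, hlt, ?_⟩
      rwa [Nat.add_comm, Function.iterate_add_apply, hkv]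
    · right
      have hret := (hr p hpV).2.1
      have hn := hl (r p - k) (by omega)
      rw [← hkv, ← Function.iterate_add_apply, Nat.sub_add_cancel hk, hkv] at hn
      by_contra hne
      exact hn ⟨lt_of_le_of_ne hret.1 (Ne.symm hne), hret.2⟩

/-- The map sending a break to a point of `A` it meets before returning, and the break returning
at `u` to the point of `A` on the orbit of `u`, is injective. -/
lemma breakSet_card (h : PiecewiseTrans T A) (h0 : 0 ≤ u) (huv : u < v) (h1 : v ≤ 1)
    (hr : IsReturnTime T u v r)
    (hu : ∃ k, T^[k] u ∈ A ∧ ∀ m ≤ k, T^[m] u ∉ Ioo u v)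
    (hv : ∃ k, T^[k] v ∈ A ∧ ∀ m ≤ k, T^[m] v ∉ Ioo u v) :
    (breakSet T A u v r).Finite ∧ (breakSet T A u v r).ncard ≤ A.card := by
  obtain ⟨k₀, hk₀A, hk₀⟩ := hu
  have huI : u ∈ Ico (0 : ℝ) 1 := ⟨h0, by linarith⟩
  -- `T^[k₀] u` labels the break returning at `u`; no break meets it before returning
  have hlab : ∀ p, ∃ a, p ∈ breakSet T A u v r → a ∈ A ∧
      ((a ≠ T^[k₀] u ∧ ∃ k < r p, T^[k] p = a) ∨ (a = T^[k₀] u ∧ T^[r p] p = u)) := by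
    intro p
    by_cases hp : p ∈ breakSet T A u v r
    swap
    · exact ⟨0, fun hp' => absurd hp' hp⟩
    have hpI := hp.1
    have hpV : p ∈ Ico u v := ⟨hpI.1.le, hpI.2⟩
    have hp01 : p ∈ Ico (0 : ℝ) 1 := ⟨h0.trans hpV.1, hpV.2.trans_le h1⟩
    rcases break_cases hr hv hp with ⟨k, hk, hkA⟩ | hret
    · refine ⟨T^[k] p, fun _ => ⟨hkA, Or.inl ⟨fun he => ?_, k, hk, rfl⟩⟩⟩
      rcases le_or_gt k k₀ with hle | hgt
      · exact hk₀ (k₀ - k) (Nat.sub_le _ _) (h.cancel hp01 huI hle he ▸ hpI)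
      · refine (hr p hpV).2.2 (k - k₀) (by omega) (by omega) ?_
        rw [← h.cancel huI hp01 hgt.le he.symm]
        exact ⟨le_rfl, huv⟩
    · exact ⟨T^[k₀] u, fun _ => ⟨hk₀A, Or.inr ⟨rfl, hret⟩⟩⟩
  choose φ hφ using hlab
  have hmaps : MapsTo φ (breakSet T A u v r) (A : Set ℝ) := fun p hp => (hφ p hp).1
  have hinj : InjOn φ (breakSet T A u v r) := by
    intro p hp p' hp' he
    have hpV : p ∈ Ico u v := ⟨hp.1.1.le, hp.1.2⟩
    have hpV' : p' ∈ Ico u v := ⟨hp'.1.1.le, hp'.1.2⟩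
    have hr0 := (hr p hpV).1
    have hr0' := (hr p' hpV').1
    rcases (hφ p hp).2 with ⟨hne, k, hk, hka⟩ | ⟨heq, hret⟩ <;>
      rcases (hφ p' hp').2 with ⟨hne', k', hk', hka'⟩ | ⟨heq', hret'⟩
    · exact h.eq_of_merge h0 h1 hr hpV hpV' (hka.trans (he.trans hka'.symm)) (by omega) (by omega)
    · exact absurd (he.trans heq') hne
    · exact absurd (he.symm.trans heq) hne'
    · exact h.eq_of_merge h0 h1 hr hpV hpV' (hret.trans hret'.symm) (by omega) (by omega)
  refine ⟨Set.Finite.of_injOn hmaps hinj A.finite_toSet, ?_⟩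
  rw [← Set.ncard_coe_finset]
  exact Set.ncard_le_ncard_of_injOn φ hmaps hinj A.finite_toSet

end PiecewiseTrans

/-! ### Surjectivity of injective piecewise translations -/

/-- The translated pieces are disjoint and have the total length of `[u,v)`, so no interval of
`[u,v)` is missed. -/
lemma surjOn_of_pieces {u v : ℝ} {s : ℕ} {q : Fin (s + 1) → ℝ} {F : ℝ → ℝ} (hq : StrictMono q)
    (hq0 : q 0 = u) (hqs : q (Fin.last s) = v) (hmaps : MapsTo F (Ico u v) (Ico u v))
    (hinj : InjOn F (Ico u v))
    (hF : ∀ i : Fin s, ∃ c : ℝ, ∀ x ∈ Ico (q i.castSucc) (q i.succ), F x = x + c) :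
    SurjOn F (Ico u v) (Ico u v) := by
  choose c hc using hF
  let P : Fin s → Set ℝ := fun i => Ico (q i.castSucc) (q i.succ)
  let Q : Fin s → Set ℝ := fun i => Ico (q i.castSucc + c i) (q i.succ + c i)
  have hPV : ∀ i, P i ⊆ Ico u v := fun i x hx =>
    ⟨by rw [← hq0]; exact (hq.monotone (Fin.zero_le _)).trans hx.1,
      by rw [← hqs]; exact hx.2.trans_le (hq.monotone (Fin.le_last _))⟩
  have hcover : Ico u v ⊆ ⋃ i, P i := by
    intro x hx
    obtain ⟨i, hi⟩ := exists_piece q x (hq0.le.trans hx.1) (hx.2.trans_le hqs.ge)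
    exact mem_iUnion.mpr ⟨i, hi⟩
  have hQ : ∀ i, ∀ y ∈ Q i, y - c i ∈ P i ∧ F (y - c i) = y := by
    intro i y hy
    have hm : y - c i ∈ P i := ⟨by linarith [hy.1], by linarith [hy.2]⟩
    exact ⟨hm, by rw [hc i _ hm]; ring⟩
  have hQV : ∀ i, Q i ⊆ Ico u v := by
    intro i y hy
    obtain ⟨hm, he⟩ := hQ i y hy
    rw [← he]
    exact hmaps (hPV i hm)
  have hPdisj : ∀ i j, i < j → Disjoint (P i) (P j) := by
    intro i j hij
    rw [Set.disjoint_left]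
    intro x hx hx'
    have : q i.succ ≤ q j.castSucc := hq.monotone (by
      rw [Fin.le_def]; simp only [Fin.val_succ, Fin.val_castSucc]; exact hij)
    linarith [hx.2, hx'.1]
  have hPdisj' : Pairwise (Function.onFun Disjoint P) := by
    intro i j hij
    rcases lt_or_gt_of_ne hij with hlt | hgt
    · exact hPdisj i j hlt
    · exact (hPdisj j i hgt).symm
  have hQdisj : Pairwise (Function.onFun Disjoint Q) := by
    intro i j hij
    refine Set.disjoint_left.mpr fun y hy hy' => ?_
    obtain ⟨hm, he⟩ := hQ i y hy
    obtain ⟨hm', he'⟩ := hQ j y hy'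
    have := hinj (hPV i hm) (hPV j hm') (he.trans he'.symm)
    exact Set.disjoint_left.mp (hPdisj' hij) hm (this ▸ hm')
  have hvol : volume (⋃ i, Q i) = volume (Ico u v) := by
    have hPU : ⋃ i, P i = Ico u v := (iUnion_subset hPV).antisymm hcover
    rw [← hPU, measure_iUnion hQdisj fun i => measurableSet_Ico,
      measure_iUnion hPdisj' fun i => measurableSet_Ico]
    congr 1
    ext i
    simp only [P, Q, Real.volume_Ico]
    congr 1
    ring
  intro y hy
  by_contra hny
  have hyQ : ∀ i, y ∉ Q i := fun i hi => hny ⟨_, hPV i (hQ i y hi).1, (hQ i y hi).2⟩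
  -- the complement of a finite union of half-open intervals contains a right neighbourhood of `y`
  have hev : ∀ᶠ w in 𝓝[>] y, ∀ i, ∀ z ∈ Ico y w, z ∉ Q i := by
    rw [eventually_all]
    intro i
    rcases lt_or_ge y (q i.castSucc + c i) with hlt | hge
    · filter_upwards [Ioo_mem_nhdsGT hlt] with w hw z hz hzQ
      linarith [hz.2, hzQ.1, hw.2]
    · refine Eventually.of_forall fun w z hz hzQ => hyQ i ⟨hge, ?_⟩
      linarith [hz.1, hzQ.2]
  obtain ⟨w, hw, hyw, hwv⟩ := (hev.and (Ioo_mem_nhdsGT hy.2)).exists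
  have hdisj : Disjoint (⋃ i, Q i) (Ico y w) := by
    rw [Set.disjoint_left]
    intro z hz hz'
    obtain ⟨i, hi⟩ := mem_iUnion.mp hz
    exact hw i z hz' hi
  have hle : volume ((⋃ i, Q i) ∪ Ico y w) ≤ volume (Ico u v) :=
    measure_mono (union_subset (iUnion_subset hQV)
      fun z hz => ⟨hy.1.trans hz.1, hz.2.trans hwv⟩)
  rw [measure_union hdisj measurableSet_Ico, hvol, Real.volume_Ico, Real.volume_Ico,
    ← ENNReal.ofReal_add (by linarith [hy.1, hy.2]) (by linarith),
    ENNReal.ofReal_le_ofReal_iff (by linarith [hy.1, hy.2])] at hle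
  linarith

/-- A finite subset of `(u,v)` subdivides `[u,v)` into `card + 1` half-open intervals. -/
lemma exists_subdivision {u v : ℝ} (huv : u < v) (B : Finset ℝ) (hB : ∀ b ∈ B, b ∈ Ioo u v) :
    ∃ q : Fin (B.card + 1 + 1) → ℝ, StrictMono q ∧ q 0 = u ∧ q (Fin.last _) = v ∧
      ∀ i : Fin (B.card + 1), ∀ x ∈ Ioo (q i.castSucc) (q i.succ), x ∉ B := by
  classical
  have hv : v ∉ B := fun hb => lt_irrefl _ (hB v hb).2
  have hu : u ∉ insert v B := by
    rw [Finset.mem_insert]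
    rintro (he | hb)
    · exact huv.ne he
    · exact lt_irrefl _ (hB u hb).1
  have hcard : (insert u (insert v B)).card = B.card + 1 + 1 := by
    rw [Finset.card_insert_of_notMem hu, Finset.card_insert_of_notMem hv]
  have hle : ∀ b ∈ insert u (insert v B), u ≤ b ∧ b ≤ v := by
    intro b hb
    simp only [Finset.mem_insert] at hb
    rcases hb with rfl | rfl | hb
    · exact ⟨le_rfl, huv.le⟩
    · exact ⟨huv.le, le_rfl⟩
    · exact ⟨(hB b hb).1.le, (hB b hb).2.le⟩
  let q := (insert u (insert v B)).orderEmbOfFin hcard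
  have hmem : ∀ i, q i ∈ insert u (insert v B) := fun i => Finset.orderEmbOfFin_mem _ hcard i
  have hsurj : ∀ b ∈ insert u (insert v B), ∃ i, q i = b := by
    intro b hb
    have := Finset.range_orderEmbOfFin (insert u (insert v B)) hcard
    have hb' : b ∈ Set.range q := by rw [this]; exact hb
    exact hb'
  refine ⟨q, q.strictMono, ?_, ?_, ?_⟩
  · obtain ⟨i, hi⟩ := hsurj u (by simp)
    exact le_antisymm (hi ▸ q.monotone (Fin.zero_le i)) (hle _ (hmem 0)).1
  · obtain ⟨i, hi⟩ := hsurj v (by simp)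
    exact le_antisymm (hle _ (hmem _)).2 (hi ▸ q.monotone (Fin.le_last i))
  · intro i x hx hxB
    obtain ⟨j, rfl⟩ := hsurj x (by simp [hxB])
    have h1 := q.lt_iff_lt.mp hx.1
    have h2 := q.lt_iff_lt.mp hx.2
    rw [Fin.lt_def] at h1 h2
    simp only [Fin.val_succ, Fin.val_castSucc] at h1 h2
    omega

/-! ### The induced exchange -/

/-- For a minimal IET on `d` intervals and any `N ≥ 1` there is a half-open interval
`V = [u,v) ⊆ [0,1)` such that every point of `V` returns to `V`, all first return
times exceed `N`, and the first return map is itself an exchange of at most `d`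
half-open subintervals of `V`: a bijection `F` of `V` which translates each of at
most `d` half-open subintervals partitioning `V`, where on the `i`-th subinterval
`F x = T^{r_i} x` and `r_i > N` is the first return time to `V` of each of its points. -/
theorem minimal_IET_induced (d : ℕ) (hd : 1 ≤ d) (E : IET d)
    (hmin : IETMinimal E.T) (N : ℕ) (hN : 1 ≤ N) :
    ∃ u v : ℝ, 0 ≤ u ∧ u < v ∧ v ≤ 1 ∧
      ∃ (s : ℕ) (q : Fin (s + 1) → ℝ) (F : ℝ → ℝ),
        s ≤ d ∧ StrictMono q ∧ q 0 = u ∧ q (Fin.last s) = v ∧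
        Set.BijOn F (Set.Ico u v) (Set.Ico u v) ∧
        ∀ i : Fin s, ∃ (c : ℝ) (ri : ℕ), N < ri ∧
          ∀ x ∈ Set.Ico (q i.castSucc) (q i.succ),
            F x = x + c ∧ F x = E.T^[ri] x ∧ E.T^[ri] x ∈ Set.Ico u v ∧
            ∀ j : ℕ, 0 < j → j < ri → E.T^[j] x ∉ Set.Ico u v := by
  obtain ⟨A, hAd, h⟩ := E.exists_breaks hd
  obtain ⟨w, hw0, hw1, hshort⟩ :=
    h.exists_no_short_return hmin (x := 0) ⟨le_rfl, zero_lt_one⟩ N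
  obtain ⟨u, v, hu0, huv, hvw, hu, hv⟩ := h.exists_good_interval hmin le_rfl hw0 hw1
  have hv1 : v ≤ 1 := hvw.le.trans hw1
  have hVI : ∀ x ∈ Ico u v, x ∈ Ico (0 : ℝ) 1 := fun x hx =>
    ⟨hu0.le.trans hx.1, hx.2.trans_le hv1⟩
  have hVW : ∀ x ∈ Ico u v, x ∈ Ico (0 : ℝ) w := fun x hx =>
    ⟨hu0.le.trans hx.1, hx.2.trans hvw⟩
  obtain ⟨r, hr⟩ : ∃ r, IsReturnTime E.T u v r := by
    classical
    have hex : ∀ x, ∃ n, x ∈ Ico u v → 0 < n ∧ E.T^[n] x ∈ Ico u v ∧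
        ∀ j, 0 < j → j < n → E.T^[j] x ∉ Ico u v := by
      intro x
      by_cases hx : x ∈ Ico u v
      swap
      · exact ⟨0, fun hx' => absurd hx' hx⟩
      have hret : ∃ n, 0 < n ∧ E.T^[n] x ∈ Ico u v := by
        obtain ⟨n, hn, hm⟩ := h.exists_return hmin hu0.le huv hv1 (hVI x hx)
        exact ⟨n, hn, hm.1.le, hm.2⟩
      exact ⟨Nat.find hret, fun _ => ⟨(Nat.find_spec hret).1, (Nat.find_spec hret).2,
        fun j hj hlt hm => Nat.find_min hret hlt ⟨hj, hm⟩⟩⟩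
    choose r hr using hex
    exact ⟨r, hr⟩
  have hrN : ∀ x ∈ Ico u v, N < r x := by
    intro x hx
    by_contra! hle
    exact hshort (r x) (hr x hx).1 hle x (hVW x hx) (hVW _ (hr x hx).2.1)
  obtain ⟨hBfin, hBcard⟩ := h.breakSet_card hu0.le huv hv1 hr hu hv
  rw [Set.ncard_eq_toFinset_card _ hBfin] at hBcard
  obtain ⟨q, hq, hq0, hqs, hqB⟩ := exists_subdivision huv hBfin.toFinset
    fun b hb => ((hBfin.mem_toFinset).mp hb).1
  have hqu : ∀ i, u ≤ q i := fun i => hq0 ▸ hq.monotone (Fin.zero_le i)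
  have hqv : ∀ i, q i ≤ v := fun i => hqs ▸ hq.monotone (Fin.le_last i)
  have hpiece := fun i => h.return_const hu0.le hv1 hr (hqu (Fin.castSucc i))
    (hq (Fin.castSucc_lt_succ (i := i))) (hqv i.succ)
    fun x hx hxB => hqB i x hx ((hBfin.mem_toFinset).mpr hxB)
  have hmaps : MapsTo (fun x => E.T^[r x] x) (Ico u v) (Ico u v) := fun x hx => (hr x hx).2.1
  have hinj : InjOn (fun x => E.T^[r x] x) (Ico u v) := by
    intro x hx y hy hxy
    have hx0 := (hr x hx).1
    have hy0 := (hr y hy).1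
    exact h.eq_of_merge hu0.le hv1 hr hx hy hxy (by omega) (by omega)
  refine ⟨u, v, hu0.le, huv, hv1, _, q, fun x => E.T^[r x] x, by omega, hq, hq0, hqs,
    ⟨hmaps, hinj, surjOn_of_pieces hq hq0 hqs hmaps hinj fun i =>
      ⟨E.T^[r (q i.castSucc)] (q i.castSucc) - q i.castSucc, fun x hx => ?_⟩⟩, fun i => ⟨E.T^[r (q i.castSucc)] (q i.castSucc) - q i.castSucc,
        r (q i.castSucc), ?_, fun x hx => ?_⟩⟩
  · obtain ⟨h1, h2⟩ := hpiece i x hx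
    simp only [h1]
    exact h2
  · exact hrN _ ⟨hqu _, (hq (Fin.castSucc_lt_succ (i := i))).trans_le (hqv _)⟩
  · obtain ⟨h1, h2⟩ := hpiece i x hx
    have hxV : x ∈ Ico u v := ⟨(hqu _).trans hx.1, hx.2.trans_le (hqv _)⟩
    have hrx := hr x hxV
    rw [h1] at hrx
    simp only [h1]
    exact ⟨h2, trivial, hrx.2.1, hrx.2.2⟩
end

section
/- Let m, n be positive integers, let λ = (λ_1, λ_2, λ_3, λ_4) be a vector with positive real entries, and let l = A_{m,n}λ rescaled so that its entries sum to 1. Let T be the (4213)-IET with lengths l, and let I_4 be its fourth (rightmost) continuity interval. Then every point of I_4 returns to I_4 under T, and the first return map of T to I_4 is an exchange of exactly four half-open subintervals of I_4; listed from left to right, these subintervals have lengths proportional to λ_4, λ_3, λ_2, λ_1, and the first return time to I_4 of every point in them is, respectively, n+2, n+1, m+n+1 and m+n. -/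
/-- The lengths of the continuity intervals of a 4-IET (`lengths E i` is `l_{i+1}`). -/
def lengths (E : IET 4) : Fin 4 → ℝ := fun i => E.a i.succ - E.a i.castSucc

/-- A 4-IET has permutation (4213): the images of its continuity intervals,
ordered from left to right in `[0,1)`, are `T(I₄), T(I₂), T(I₁), T(I₃)`. -/
def IsPerm4213 (E : IET 4) : Prop :=
  E.T '' Set.Ico (E.a 3) (E.a 4) = Set.Ico (0 : ℝ) (E.a 4 - E.a 3) ∧
  E.T '' Set.Ico (E.a 1) (E.a 2) =
    Set.Ico (E.a 4 - E.a 3) ((E.a 4 - E.a 3) + (E.a 2 - E.a 1)) ∧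
  E.T '' Set.Ico (E.a 0) (E.a 1) =
    Set.Ico ((E.a 4 - E.a 3) + (E.a 2 - E.a 1))
      ((E.a 4 - E.a 3) + (E.a 2 - E.a 1) + (E.a 1 - E.a 0)) ∧
  E.T '' Set.Ico (E.a 2) (E.a 3) =
    Set.Ico ((E.a 4 - E.a 3) + (E.a 2 - E.a 1) + (E.a 1 - E.a 0)) 1

/-- The Keane matrix `A_{m,n}`. -/
def keaneA (m n : ℕ) : Matrix (Fin 4) (Fin 4) ℝ :=
  !![0, 0, 1, 1;
     (m : ℝ) - 1, (m : ℝ), 0, 0;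
     (n : ℝ), (n : ℝ), (n : ℝ) - 1, (n : ℝ);
     1, 1, 1, 1]

/-- A translation taking `[a, b)` onto `[L, R)` is the translation by `L - a`. -/
lemma translation_eq {T : ℝ → ℝ} {a b L R : ℝ} (hab : a < b)
    (hc : ∃ c : ℝ, ∀ x ∈ Set.Ico a b, T x = x + c)
    (him : T '' Set.Ico a b = Set.Ico L R) :
    ∀ x, a ≤ x → x < b → T x = x + (L - a) := by
  obtain ⟨c, hc⟩ := hc
  have ha : T a ∈ Set.Ico L R := him ▸ Set.mem_image_of_mem T ⟨le_rfl, hab⟩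
  have hL : L ∈ T '' Set.Ico a b := him ▸ ⟨le_rfl, ha.1.trans_lt ha.2⟩
  obtain ⟨y, hy, hyL⟩ := hL
  rw [hc a ⟨le_rfl, hab⟩] at ha
  rw [hc y hy] at hyL
  have h1 := ha.1
  have h2 := hy.1
  intro x hx hxb
  rw [hc x ⟨hx, hxb⟩]
  linarith

/-- `k` steps of `T` take `y` to `z`, and the orbit stays below `p` before the `k`-th step. -/
def Climb (T : ℝ → ℝ) (p : ℝ) (k : ℕ) (y z : ℝ) : Prop :=
  T^[k] y = z ∧ ∀ j < k, T^[j] y < p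

lemma Climb.trans {T : ℝ → ℝ} {p x y z : ℝ} {k l : ℕ} (h : Climb T p k x y)
    (h' : Climb T p l y z) : Climb T p (l + k) x z := by
  refine ⟨by rw [Function.iterate_add_apply, h.1, h'.1], fun j hj => ?_⟩
  rcases lt_or_ge j k with hjk | hjk
  · exact h.2 j hjk
  · obtain ⟨i, rfl⟩ := Nat.exists_eq_add_of_le' hjk
    rw [Function.iterate_add_apply, h.1]
    exact h'.2 i (by omega)

/-- If `T` translates `[L, R)` by `d ≥ 0`, the orbit climbs by steps `d` as long as it stays in
`[L, R)`. For `k = 0` the last hypothesis is about a point that does not occur in the orbit. -/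
lemma climb_of_translate {T : ℝ → ℝ} {p L R d y : ℝ} {k : ℕ} (hd : 0 ≤ d) (hRp : R ≤ p)
    (hT : ∀ x, L ≤ x → x < R → T x = x + d) (hL : L ≤ y) (hR : y + ((k : ℝ) - 1) * d < R) :
    Climb T p k y (y + k * d) := by
  have hbound : ∀ j : ℕ, j < k → L ≤ y + j * d ∧ y + j * d < R := fun j hj => by
    have hj' : (j : ℝ) ≤ k - 1 := by
      have : ((j + 1 : ℕ) : ℝ) ≤ k := by exact_mod_cast hj
      push_cast at this
      linarith
    have h1 := mul_le_mul_of_nonneg_right hj' hd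
    have h2 : 0 ≤ (j : ℝ) * d := by positivity
    constructor <;> linarith
  have hiter : ∀ j : ℕ, j ≤ k → T^[j] y = y + j * d := by
    intro j
    induction j with
    | zero => simp
    | succ j ih =>
      intro hj
      rw [Function.iterate_succ_apply', ih (by omega), hT _ (hbound j hj).1 (hbound j hj).2]
      push_cast
      ring
  refine ⟨hiter k le_rfl, fun j hj => ?_⟩
  rw [hiter j hj.le]
  exact (hbound j hj).2.trans_le hRp

/-- A climb that starts at `T x` and ends in `[p, 1)` gives the first return of `x` to `[p, 1)`. -/
lemma Climb.first_return {T : ℝ → ℝ} {p x z : ℝ} {k N : ℕ} (h : Climb T p k (T x) z)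
    (hN : N = k + 1) (hz : z ∈ Set.Ico p 1) :
    z = T^[N] x ∧ T^[N] x ∈ Set.Ico p 1 ∧ ∀ j : ℕ, 0 < j → j < N → T^[j] x ∉ Set.Ico p 1 := by
  subst hN
  have hk : T^[k + 1] x = z := h.1
  refine ⟨hk.symm, hk ▸ hz, fun j hj hjk hmem => ?_⟩
  obtain ⟨i, rfl⟩ := Nat.exists_eq_succ_of_ne_zero hj.ne'
  exact absurd hmem.1 (not_le.2 (h.2 i (by omega)))

/-- Let `l = A_{m,n} λ` rescaled to sum `1`, where `λ` has positive entries, and let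
`T` be the (4213)-IET with lengths `l`. Then every point of `I₄` returns to `I₄`,
and the first return map to `I₄` is an exchange of exactly four half-open
subintervals of `I₄`, which, from left to right, have lengths proportional to
`λ₄, λ₃, λ₂, λ₁` and first return times `n+2, n+1, m+n+1, m+n`. -/
theorem keane_induced_on_I4 (m n : ℕ) (hm : 0 < m) (hn : 0 < n)
    (lam : Fin 4 → ℝ) (hlam : ∀ i, 0 < lam i) (E : IET 4)
    (hlen : ∀ i : Fin 4,
      lengths E i =
        Matrix.mulVec (keaneA m n) lam i / ∑ j : Fin 4, Matrix.mulVec (keaneA m n) lam j)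
    (hperm : IsPerm4213 E) :
    ∃ q : Fin 5 → ℝ, StrictMono q ∧ q 0 = E.a 3 ∧ q 4 = 1 ∧
      (∃ c : ℝ, 0 < c ∧ q 1 - q 0 = c * lam 3 ∧ q 2 - q 1 = c * lam 2 ∧
        q 3 - q 2 = c * lam 1 ∧ q 4 - q 3 = c * lam 0) ∧
      ∃ F : ℝ → ℝ, Set.BijOn F (Set.Ico (E.a 3) 1) (Set.Ico (E.a 3) 1) ∧
        ∃ t : Fin 4 → ℝ, (∀ i j : Fin 4, i ≠ j → t i ≠ t j) ∧
          ∀ i : Fin 4, ∀ x ∈ Set.Ico (q i.castSucc) (q i.succ),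
            F x = x + t i ∧
            F x = E.T^[![n + 2, n + 1, m + n + 1, m + n] i] x ∧
            E.T^[![n + 2, n + 1, m + n + 1, m + n] i] x ∈ Set.Ico (E.a 3) 1 ∧
            ∀ j : ℕ, 0 < j → j < ![n + 2, n + 1, m + n + 1, m + n] i →
              E.T^[j] x ∉ Set.Ico (E.a 3) 1 := by
  obtain ⟨h4, h2, h1, h3⟩ := hperm
  have ha0 : E.a 0 = 0 := E.a_zero
  have ha4 : E.a 4 = 1 := E.a_last
  have m01 : E.a 0 < E.a 1 := E.mono (by decide)
  have m12 : E.a 1 < E.a 2 := E.mono (by decide)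
  have m23 : E.a 2 < E.a 3 := E.mono (by decide)
  have m34 : E.a 3 < E.a 4 := E.mono (by decide)
  have T1 := translation_eq m01 (E.translate 0) h1
  have T2 := translation_eq m12 (E.translate 1) h2
  have T3 := translation_eq m23 (E.translate 2) h3
  have T4 := translation_eq m34 (E.translate 3) h4
  obtain ⟨m, rfl⟩ := Nat.exists_eq_succ_of_ne_zero hm.ne'
  obtain ⟨n, rfl⟩ := Nat.exists_eq_succ_of_ne_zero hn.ne'
  set S := ∑ j : Fin 4, Matrix.mulVec (keaneA m.succ n.succ) lam j
  have e0 : E.a 1 - E.a 0 = _ := hlen 0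
  have e1 : E.a 2 - E.a 1 = _ := hlen 1
  have e2 : E.a 3 - E.a 2 = _ := hlen 2
  have e3 : E.a 4 - E.a 3 = _ := hlen 3
  simp only [keaneA, Matrix.mulVec, dotProduct, Fin.sum_univ_four, Matrix.of_apply,
    Matrix.cons_val, Nat.cast_succ] at e0 e1 e2 e3
  have p0 := hlam 0
  have p1 := hlam 1
  have p2 := hlam 2
  have p3 := hlam 3
  -- `S > 0` because the positive length `l₄` is `(λ₁ + λ₂ + λ₃ + λ₄) / S`.
  have hS : 0 < S := by
    by_contra! hS
    have := div_nonpos_of_nonneg_of_nonpos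
      (show 0 ≤ 1 * lam 0 + 1 * lam 1 + 1 * lam 2 + 1 * lam 3 by linarith) hS
    linarith
  obtain ⟨c, hc⟩ : ∃ c, c = S⁻¹ := ⟨_, rfl⟩
  have cpos : 0 < c := hc ▸ inv_pos.2 hS
  rw [div_eq_mul_inv, ← hc] at e0 e1 e2 e3
  obtain ⟨u1, hu1⟩ : ∃ u, u = c * lam 0 := ⟨_, rfl⟩
  obtain ⟨u2, hu2⟩ : ∃ u, u = c * lam 1 := ⟨_, rfl⟩
  obtain ⟨u3, hu3⟩ : ∃ u, u = c * lam 2 := ⟨_, rfl⟩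
  obtain ⟨u4, hu4⟩ : ∃ u, u = c * lam 3 := ⟨_, rfl⟩
  have v1 : 0 < u1 := hu1 ▸ mul_pos cpos p0
  have v2 : 0 < u2 := hu2 ▸ mul_pos cpos p1
  have v3 : 0 < u3 := hu3 ▸ mul_pos cpos p2
  have v4 : 0 < u4 := hu4 ▸ mul_pos cpos p3
  have f0 : E.a 1 = u3 + u4 := by rw [hu3, hu4]; linarith
  have f1 : E.a 2 = E.a 1 + (m * (u1 + u2) + u2) := by rw [hu1, hu2]; linarith
  have f2 : E.a 3 = E.a 2 + ((n + 1) * (u1 + u2 + u3 + u4) - u3) := by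
    rw [hu1, hu2, hu3, hu4]; linarith
  have f3 : 1 = E.a 3 + (u1 + u2 + u3 + u4) := by rw [hu1, hu2, hu3, hu4]; linarith
  have T1' : ∀ x, 0 ≤ x → x < E.a 1 → E.T x = x + (E.a 2 + u1 + u2) := by
    intro x hx hx'
    rw [T1 x (by linarith) hx']
    linarith
  have T2' : ∀ x, E.a 1 ≤ x → x < E.a 2 → E.T x = x + (u1 + u2) := by
    intro x hx hx'
    rw [T2 x hx hx']
    linarith
  have T3' : ∀ x, E.a 2 ≤ x → x < E.a 3 → E.T x = x + (u1 + u2 + u3 + u4) := by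
    intro x hx hx'
    rw [T3 x hx hx']
    linarith
  have T4' : ∀ x, E.a 3 ≤ x → x < 1 → E.T x = x - E.a 3 := by
    intro x hx hx'
    rw [T4 x hx (by linarith)]
    ring
  clear T1 T2 T3 T4 h1 h2 h3 h4 e0 e1 e2 e3 m01 m12 m34
  set b₁ := E.a 1 with hp1
  set b₂ := E.a 2 with hp2
  set p := E.a 3 with hp
  have hmu : 0 ≤ (m : ℝ) * (u1 + u2) := by positivity
  have hnu : 0 ≤ (n : ℝ) * (u1 + u2 + u3 + u4) := by positivity
  obtain ⟨F, hF⟩ : ∃ F : ℝ → ℝ, F = fun x =>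
      if x < p + u4 then x + (u1 + u2 + u3)
      else if x < p + u4 + u3 then x + -u4
      else if x < p + u4 + u3 + u2 then x + (u1 - u4)
      else x + (-u2 - u4) := ⟨_, rfl⟩
  refine ⟨![p, p + u4, p + u4 + u3, p + u4 + u3 + u2, 1], ?_, rfl, rfl,
    ⟨c, cpos, ?_, ?_, ?_, ?_⟩,
    F, ⟨?_, ?_, ?_⟩,
    ![u1 + u2 + u3, -u4, u1 - u4, -u2 - u4], ?_, ?_⟩
  · rw [Fin.strictMono_iff_lt_succ]
    intro i
    fin_cases i <;> simp <;> linarith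
  · simp; linarith
  · simp; linarith
  · simp; linarith
  · simp; linarith
  · rintro x ⟨hx, hx'⟩
    simp only [hF]
    split_ifs <;> constructor <;> linarith
  · rintro x ⟨hx, hx'⟩ y ⟨hy, hy'⟩ hxy
    simp only [hF] at hxy
    split_ifs at hxy <;> linarith
  · -- From left to right, the images are those of the second, fourth, third and first subinterval.
    rintro y ⟨hy, hy'⟩
    by_cases c2 : y < p + u3
    · refine ⟨y + u4, ⟨by linarith, by linarith⟩, ?_⟩
      simp only [hF]
      split_ifs <;> linarith
    by_cases c4 : y < p + u3 + u1
    · refine ⟨y + u2 + u4, ⟨by linarith, by linarith⟩, ?_⟩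
      simp only [hF]
      split_ifs <;> linarith
    by_cases c3 : y < p + u3 + u1 + u2
    · refine ⟨y - u1 + u4, ⟨by linarith, by linarith⟩, ?_⟩
      simp only [hF]
      split_ifs <;> linarith
    · refine ⟨y - u1 - u2 - u3, ⟨by linarith, by linarith⟩, ?_⟩
      simp only [hF]
      split_ifs <;> linarith
  · intro i j hij
    fin_cases i <;> fin_cases j <;> first | exact absurd rfl hij | (simp; intro h; linarith)
  -- The first two subintervals are sent into `I₁` and jump from there directly into `I₃`.
  have first_two : ∀ x, p ≤ x → x < p + u4 + u3 →
      Climb E.T p 1 (E.T x) (x - p + (b₂ + u1 + u2)) := fun x hx hx' => by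
    rw [T4' x hx (by linarith)]
    simpa using climb_of_translate (k := 1) (y := x - p) (by linarith : 0 ≤ b₂ + u1 + u2)
      (by linarith : b₁ ≤ p) T1' (by linarith) (by push_cast; linarith)
  intro i x hx
  fin_cases i
  · obtain ⟨hx, hx'⟩ : p ≤ x ∧ x < p + u4 := hx
    have C := climb_of_translate (k := n + 1) (by linarith) le_rfl T3'
      (y := x - p + (b₂ + u1 + u2)) (by linarith) (by push_cast; linarith)
    have key := ((first_two x hx (by linarith)).trans C).first_return
      (N := n.succ + 2) (by omega) (by push_cast; constructor <;> linarith)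
    have hFx : F x = x + (u1 + u2 + u3) := by
      simp only [hF]
      rw [if_pos hx']
    refine ⟨hFx, hFx.trans (Eq.trans ?_ key.1), key.2⟩
    push_cast
    linarith
  · obtain ⟨hx, hx'⟩ : p + u4 ≤ x ∧ x < p + u4 + u3 := hx
    have C := climb_of_translate (k := n) (by linarith) le_rfl T3'
      (y := x - p + (b₂ + u1 + u2)) (by linarith) (by linarith)
    have key := ((first_two x (by linarith) hx').trans C).first_return
      (N := n.succ + 1) (by omega) (by constructor <;> linarith)
    have hFx : F x = x + (-u4) := by
      simp only [hF]
      rw [if_neg (by linarith), if_pos hx']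
    refine ⟨hFx, hFx.trans (Eq.trans ?_ key.1), key.2⟩
    linarith
  · obtain ⟨hx, hx'⟩ : p + u4 + u3 ≤ x ∧ x < p + u4 + u3 + u2 := hx
    have hTx : E.T x = x - p := T4' x (by linarith) (by linarith)
    have B := climb_of_translate (k := m + 1) (y := E.T x) (by linarith) m23.le T2'
      (by rw [hTx]; linarith)
      (by rw [hTx]; push_cast; linarith)
    have C := climb_of_translate (k := n + 1) (y := E.T x + ((m + 1 : ℕ) : ℝ) * (u1 + u2))
      (by linarith) le_rfl T3'
      (by rw [hTx]; push_cast; linarith)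
      (by rw [hTx]; push_cast; linarith)
    have key := (B.trans C).first_return (N := m.succ + n.succ + 1) (by omega)
      (by rw [hTx]; push_cast; constructor <;> linarith)
    have hFx : F x = x + (u1 - u4) := by
      simp only [hF]
      rw [if_neg (by linarith), if_neg (by linarith), if_pos hx']
    refine ⟨hFx, hFx.trans (Eq.trans ?_ key.1), key.2⟩
    rw [hTx]
    push_cast
    linarith
  · obtain ⟨hx, hx'⟩ : p + u4 + u3 + u2 ≤ x ∧ x < 1 := hx
    have hTx : E.T x = x - p := T4' x (by linarith) (by linarith)
    have B := climb_of_translate (k := m) (y := E.T x) (by linarith) m23.le T2'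
      (by rw [hTx]; linarith)
      (by rw [hTx]; linarith)
    have C := climb_of_translate (k := n + 1) (y := E.T x + (m : ℝ) * (u1 + u2))
      (by linarith) le_rfl T3'
      (by rw [hTx]; linarith)
      (by rw [hTx]; push_cast; linarith)
    have key := (B.trans C).first_return (N := m.succ + n.succ) (by omega)
      (by rw [hTx]; push_cast; constructor <;> linarith)
    have hFx : F x = x + (-u2 - u4) := by
      simp only [hF]
      rw [if_neg (by linarith), if_neg (by linarith), if_neg (by linarith)]
    refine ⟨hFx, hFx.trans (Eq.trans ?_ key.1), key.2⟩
    rw [hTx]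
    push_cast
    linarith
end
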